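/- arXiv:1104.5066 — 2 statements merged into one kernel-verified Lean document; each statement's English description precedes it below -/
import Mathlib

section
/- Let m ≥ 1 be an integer and let p ∈ ℂ be such that (2 − p)/4 does not lie on the closed negative real axis (in particular p ≠ 2). For real ν > 0 define E(ν) := ν²·Γ(m)²·Γ(2iν + 1 − m)²·(p − 2)/(16^{2iν}·Γ(1 + iν)⁴), where Γ is the complex Gamma function and 16^{2iν} = exp(2iν·ln 16). Then E(ν) → (2 − p)/4 as ν → 0⁺, and ( −(i/2)·Log E(ν) + (i/2)·Log((2 − p)/4) ) / ν tends to 2·( Σ_{k=1}^{m−1} 1/k − 2·ln 2 ) as ν → 0⁺, where Log is the principal branch of the complex logarithm. -/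
open Complex

/-- The quantity whose principal logarithm gives the integration constant in the
resonant case `2μ = 2iν + 1 − 2m`:
`E(ν) = ν²·Γ(m)²·Γ(2iν+1−m)²·(p−2)/(16^{2iν}·Γ(1+iν)⁴)`. -/
noncomputable def E (m : ℕ) (p : ℂ) (ν : ℝ) : ℂ :=
  (ν:ℂ)^2 * Complex.Gamma (m:ℂ)^2 * Complex.Gamma (2*I*(ν:ℂ) + 1 - (m:ℂ))^2 * (p - 2) /
    (Complex.exp (2*I*(ν:ℂ)*(Real.log 16 : ℂ)) * Complex.Gamma (1 + I*(ν:ℂ))^4)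

/-!
By Euler's reflection formula `z Γ(z + 1 - m) Γ(m - z) = ± Γ(1 + z) Γ(1 - z)`, and the sign
disappears on squaring. With `z = 2iν`, so that `ν² (p - 2) = z² (2 - p) / 4`, this rewrites `E(ν)`
as a function of `z` which is holomorphic at `z = 0`, takes the value `(2 - p) / 4` there, and has
logarithmic derivative `2 (ψ(m) - ψ(1)) - ln 16`. Since `-(i/2) · 2i = 1`, this number is the limit
sought, and `ψ(m) - ψ(1)` is a harmonic number.
-/

lemma hasDerivAt_Gamma_comp {f : ℂ → ℂ} {f' x : ℂ} (hf : HasDerivAt f f' x)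
    (hx : ∀ k : ℕ, f x ≠ -k) :
    HasDerivAt (fun z ↦ Gamma (f z)) (Gamma (f x) * digamma (f x) * f') x := by
  rw [digamma_def, logDeriv_apply, mul_div_cancel₀ _ (Gamma_ne_zero hx)]
  exact (differentiableAt_Gamma (f x) hx).hasDerivAt.comp x hf

lemma natCast_ne_neg_natCast {m : ℕ} (hm : 1 ≤ m) (k : ℕ) : (m : ℂ) ≠ -k := by
  rw [Ne, eq_neg_iff_add_eq_zero]
  exact_mod_cast (by lia : m + k ≠ 0)

lemma digamma_natCast {m : ℕ} (hm : 1 ≤ m) :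
    digamma m = ∑ k ∈ Finset.Icc 1 (m - 1), 1 / (k : ℂ) - Real.eulerMascheroniConstant := by
  obtain ⟨n, rfl⟩ := Nat.exists_eq_add_of_le' hm
  have factorial_ne : (n.factorial : ℂ) ≠ 0 := Nat.cast_ne_zero.mpr n.factorial_ne_zero
  rw [Nat.cast_succ, digamma_def, logDeriv_apply, deriv_Gamma_nat, Gamma_nat_eq_factorial,
    mul_div_cancel_left₀ _ factorial_ne, harmonic_eq_sum_Icc, neg_add_eq_sub]
  simp

lemma mul_Gamma_mul_Gamma_natCast_sub {z : ℂ} (hz : z ≠ 0) (m : ℕ) :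
    z * Gamma (z + 1 - m) * Gamma (m - z) = (-1) ^ (m + 1) * (Gamma (1 + z) * Gamma (1 - z)) := by
  have sin_shift : sin (Real.pi * (z + 1 - m)) = (-1) ^ (m + 1) * sin (Real.pi * z) := by
    rw [show Real.pi * (z + 1 - m) = Real.pi * z + Real.pi - m * Real.pi by ring,
      sin_antiperiodic.sub_nat_mul_eq, sin_add_pi]
    ring
  have sign_inv : ((-1 : ℂ) ^ (m + 1))⁻¹ = (-1) ^ (m + 1) := by rw [← inv_pow, inv_neg_one]
  have reflection := Gamma_mul_Gamma_one_sub (z + 1 - m)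
  rw [show 1 - (z + 1 - m) = m - z by ring, sin_shift] at reflection
  calc z * Gamma (z + 1 - m) * Gamma (m - z)
      = (-1) ^ (m + 1) * (z * (Real.pi / sin (Real.pi * z))) := by
        rw [mul_assoc, reflection, ← div_div, div_right_comm, div_eq_mul_inv _ ((-1) ^ _), sign_inv]
        ring
    _ = (-1) ^ (m + 1) * (Gamma (1 + z) * Gamma (1 - z)) := by
        rw [← Gamma_mul_Gamma_one_sub, ← mul_assoc z, ← Gamma_add_one z hz, add_comm z]

/-- The holomorphic extension of `E` to a neighbourhood of `ν = 0`, in the variable `z = 2iν`. The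
parameter `c` is its value at `z = 0`, which is `(2 - p) / 4` for `E m p`; the parameter `m` may be
any complex number at which `Γ` has no pole. -/
noncomputable def holomorphicE (m c z : ℂ) : ℂ :=
  c * (Gamma m * (Gamma (1 + z) * Gamma (1 - z)) / Gamma (m - z)) ^ 2 /
    (exp (z * Real.log 16) * Gamma (1 + z / 2) ^ 4)

lemma E_eq_holomorphicE (m : ℕ) (p : ℂ) {ν : ℝ} (hν : ν ≠ 0) :
    E m p ν = holomorphicE m ((2 - p) / 4) (2 * I * ν) := by
  have z_ne_zero : 2 * I * (ν : ℂ) ≠ 0 := by simp [hν]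
  have Gamma_ne : Gamma (m - 2 * I * ν) ≠ 0 :=
    Gamma_ne_zero fun k hk ↦ hν (by simpa using congrArg im hk)
  have sign_sq : ((-1 : ℂ) ^ (m + 1)) ^ 2 = 1 := by rw [← pow_mul, pow_mul', neg_one_sq, one_pow]
  have reflection_sq := congrArg (· ^ 2) (mul_Gamma_mul_Gamma_natCast_sub z_ne_zero m)
  simp only [mul_pow _ _ 2, sign_sq, one_mul] at reflection_sq
  rw [E, holomorphicE, show 1 + 2 * I * (ν : ℂ) / 2 = 1 + I * ν by ring]
  congr 1
  rw [div_pow, mul_pow, mul_pow, ← reflection_sq, mul_div_assoc',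
    eq_div_iff (pow_ne_zero 2 Gamma_ne), I_sq]
  ring

section

variable {m : ℂ}

lemma holomorphicE_zero (hm : ∀ k : ℕ, m ≠ -k) (c : ℂ) : holomorphicE m c 0 = c := by
  simp [holomorphicE, Gamma_ne_zero hm]

lemma hasDerivAt_Gamma_ratio (hm : ∀ k : ℕ, m ≠ -k) :
    HasDerivAt (fun z ↦ Gamma m * (Gamma (1 + z) * Gamma (1 - z)) / Gamma (m - z))
      (digamma m) 0 := by
  have hΓm : Gamma m ≠ 0 := Gamma_ne_zero hm
  have one_ne (k : ℕ) : (1 : ℂ) ≠ -k := by simpa using natCast_ne_neg_natCast le_rfl k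
  have h_id := hasDerivAt_id' (0 : ℂ)
  have h_one_add : HasDerivAt (fun z ↦ Gamma (1 + z)) (digamma 1) 0 := by
    simpa using hasDerivAt_Gamma_comp (h_id.const_add 1) (by simpa using one_ne)
  have h_one_sub : HasDerivAt (fun z ↦ Gamma (1 - z)) (-digamma 1) 0 := by
    simpa using hasDerivAt_Gamma_comp (h_id.const_sub 1) (by simpa using one_ne)
  have h_sub : HasDerivAt (fun z ↦ Gamma (m - z)) (-(Gamma m * digamma m)) 0 := by
    simpa using hasDerivAt_Gamma_comp (h_id.const_sub m) (by simpa using hm)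
  refine (((h_one_add.mul h_one_sub).const_mul _).div h_sub (by simpa)).congr_deriv ?_
  simp [field]

lemma hasDerivAt_exp_mul_Gamma_pow_four (a : ℂ) :
    HasDerivAt (fun z ↦ exp (z * a) * Gamma (1 + z / 2) ^ 4) (a + 2 * digamma 1) 0 := by
  have one_ne (k : ℕ) : (1 : ℂ) ≠ -k := by simpa using natCast_ne_neg_natCast le_rfl k
  have h_id := hasDerivAt_id' (0 : ℂ)
  have h_exp : HasDerivAt (fun z ↦ exp (z * a)) a 0 := by simpa using (h_id.mul_const a).cexp
  have h_Gamma : HasDerivAt (fun z ↦ Gamma (1 + z / 2)) (digamma 1 / 2) 0 := by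
    simpa [div_eq_mul_inv] using
      hasDerivAt_Gamma_comp ((h_id.div_const 2).const_add 1) (by simpa using one_ne)
  refine (h_exp.mul (h_Gamma.pow 4)).congr_deriv ?_
  simp only [zero_mul, exp_zero, zero_div, add_zero, Gamma_one, Pi.pow_apply, one_pow]
  ring

lemma hasDerivAt_holomorphicE (hm : ∀ k : ℕ, m ≠ -k) (c : ℂ) :
    HasDerivAt (holomorphicE m c) (c * (2 * (digamma m - digamma 1) - Real.log 16)) 0 := by
  have h_num := ((hasDerivAt_Gamma_ratio hm).pow 2).const_mul c
  have h_denom := hasDerivAt_exp_mul_Gamma_pow_four (Real.log 16)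
  refine (h_num.div h_denom (by simp)).congr_deriv ?_
  simp only [Pi.pow_apply, add_zero, sub_zero, zero_mul, zero_div, exp_zero, Gamma_one, mul_one,
    one_pow, div_self (Gamma_ne_zero hm)]
  ring

lemma hasDerivAt_log_holomorphicE (hm : ∀ k : ℕ, m ≠ -k) {c : ℂ} (hc : c ∈ slitPlane) :
    HasDerivAt (fun z ↦ log (holomorphicE m c z))
      (2 * (digamma m - digamma 1) - Real.log 16) 0 := by
  have h_log := (hasDerivAt_holomorphicE hm c).clog (by rwa [holomorphicE_zero hm])
  rwa [holomorphicE_zero hm, mul_div_cancel_left₀ _ (slitPlane_ne_zero hc)] at h_log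

lemma hasDerivAt_neg_I_div_two_mul_log_holomorphicE (hm : ∀ k : ℕ, m ≠ -k) {c : ℂ}
    (hc : c ∈ slitPlane) :
    HasDerivAt (fun ν : ℂ ↦ -(I / 2) * log (holomorphicE m c (2 * I * ν)))
      (2 * (digamma m + Real.eulerMascheroniConstant - 2 * Real.log 2)) 0 := by
  have log_sixteen : Real.log 16 = 4 * Real.log 2 := by
    rw [show (16 : ℝ) = 2 ^ 4 by norm_num, Real.log_pow, Nat.cast_ofNat]
  have h_scale : HasDerivAt (fun ν : ℂ ↦ 2 * I * ν) (2 * I) 0 := by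
    simpa using (hasDerivAt_id' (0 : ℂ)).const_mul (2 * I)
  have h_comp := (hasDerivAt_log_holomorphicE hm hc).comp_of_eq 0 h_scale (by simp)
  refine (h_comp.const_mul (-(I / 2))).congr_deriv ?_
  rw [digamma_one, log_sixteen]
  push_cast
  linear_combination
    -(2 * (digamma m + Real.eulerMascheroniConstant) - 4 * Real.log 2) * I_sq

end

/-- for an integer `m ≥ 1` and `p ∈ ℂ` with `(2−p)/4` off the closed
negative real axis, `E(ν) → (2−p)/4` as `ν → 0⁺`, and
`(−(i/2)·Log E(ν) + (i/2)·Log((2−p)/4))/ν → 2(Σ_{k=1}^{m−1} 1/k − 2·ln 2)`. -/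
theorem stmt_17 (m : ℕ) (hm : 1 ≤ m) (p : ℂ)
    (hp : ¬ (((2 - p)/4).re ≤ 0 ∧ ((2 - p)/4).im = 0)) :
    Filter.Tendsto (fun ν : ℝ => E m p ν) (nhdsWithin 0 (Set.Ioi 0)) (nhds ((2 - p)/4)) ∧
    Filter.Tendsto
      (fun ν : ℝ =>
        (-(I/2) * Complex.log (E m p ν) + (I/2) * Complex.log ((2 - p)/4)) / (ν:ℂ))
      (nhdsWithin 0 (Set.Ioi 0))
      (nhds (2 * ((∑ k ∈ Finset.Icc 1 (m-1), (1:ℂ)/(k:ℂ)) - 2*(Real.log 2 : ℂ)))) := by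
  have m_ne := natCast_ne_neg_natCast hm
  have hc : (2 - p) / 4 ∈ slitPlane := by
    rw [mem_slitPlane_iff]
    by_contra! h
    exact hp h
  have h_extension : ∀ᶠ ν : ℝ in nhdsWithin 0 (Set.Ioi 0),
      holomorphicE m ((2 - p) / 4) (2 * I * ν) = E m p ν := by
    filter_upwards [self_mem_nhdsWithin] with ν hν
    exact (E_eq_holomorphicE m p (ne_of_gt hν)).symm
  have h_value := holomorphicE_zero m_ne ((2 - p) / 4)
  constructor
  · have h_cont : ContinuousAt (fun ν : ℝ ↦ holomorphicE m ((2 - p) / 4) (2 * I * ν)) 0 :=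
      (hasDerivAt_holomorphicE m_ne _).continuousAt.comp_of_eq (by fun_prop) (by simp)
    simpa [h_value] using (h_cont.tendsto.mono_left nhdsWithin_le_nhds).congr' h_extension
  · have h_slope := HasDerivAt.tendsto_slope_zero_right <| HasDerivAt.comp_ofReal (z := 0) <|
      ofReal_zero.symm ▸ hasDerivAt_neg_I_div_two_mul_log_holomorphicE m_ne hc
    rw [digamma_natCast hm, sub_add_cancel] at h_slope
    refine h_slope.congr' ?_
    filter_upwards [h_extension] with ν hν
    simp only [zero_add, ofReal_zero, mul_zero, hν, h_value, real_smul, ofReal_inv]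
    ring
end

section
/- Let μ ∈ ℂ, let ν be a nonzero real number, and let φ ∈ ℂ, with 2μ−1 ≠ 2iν and 2μ−1 ≠ −2iν. Then there exist ε ∈ (0, 1), C > 0, and a holomorphic function u on the slit punctured disk D := { x ∈ ℂ : 0 < |x| < ε and |arg x| < π } (arg the principal argument) such that: (i) for every x ∈ D, ‖u(x) − ( 1 − ((4ν² + (2μ−1)²)/(4ν²))·sin²( ν·Log x + φ/2 − π/4 ) )‖ ≤ C·|x|, where Log is the principal branch of the complex logarithm; and (ii) for every x ∈ D at which u(x) ∉ {0, 1, 1/x}, the function y := 1/u is twice complex-differentiable near x and satisfies the Painlevé VI equation PVI_μ at x: y'' = (1/2)·(1/y + 1/(y−1) + 1/(y−x))·(y')² − (1/x + 1/(x−1) + 1/(y−x))·y' + (1/2)·( y(y−1)(y−x)/(x²(x−1)²) )·( (2μ−1)² + x(x−1)/(y−x)² ). -/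
open Complex

/-!
Write `y = 1 / u`, `u = 1 - w ^ 2` and `x = exp z`. Adjoining an energy `E`, the Painlevé VI
equation becomes the system `w' = P`, `P' = -E w`, `E' = 0` in the variable `z`, perturbed by terms
of size `x` which are analytic in `(x, w, P, E)`. At `x = 0` this is a harmonic oscillator, with
solutions `w = R sin (ν z + κ)`, `E = ν ^ 2`, which stay bounded on the half-strip `|Im z| < π`,
`Re z < ρ`, the image under `log` of a slit disk.

Variation of constants turns the difference from such a solution into an unknown `((a, b), e)` that
tends to `0` at `-∞` and satisfies an integral equation along horizontal rays. Its only coupling not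
of size `x` is the effect of `e` on `(a, b)`; this is triangular, so rescaling `e` makes the
integral operator a contraction for the weight `|exp z|`, whence a solution of size `O(x)`.

The energy is tied to `w` and `P` by a first integral of the system, which has to vanish. Being
constant, it vanishes as soon as its limit at `-∞` does, which amounts to the relation
`4 ν ^ 2 R ^ 2 = 4 ν ^ 2 + (2 μ - 1) ^ 2` for the amplitude.
-/

section LeftPrimitive

open MeasureTheory Filter Topology Set

/-- Stability of `U` under translation towards `-∞`, the limit in which every solution below is
normalised. -/
def IsLeftStable (U : Set ℂ) : Prop :=
  ∀ ⦃z⦄, z ∈ U → ∀ ⦃s : ℝ⦄, s ≤ 0 → z + s ∈ U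

variable {E : Type*} [NormedAddCommGroup E] {U : Set ℂ} {f g : ℂ → E} {B : ℝ} {z : ℂ}

theorem norm_add_ofReal_le (hU : IsLeftStable U) (hB : ∀ z ∈ U, ‖f z‖ ≤ B * ‖exp z‖)
    (hz : z ∈ U) {s : ℝ} (hs : s ≤ 0) : ‖f (z + s)‖ ≤ B * ‖exp z‖ * Real.exp s := by
  simpa [Complex.exp_add, Complex.norm_exp_ofReal, mul_assoc] using hB _ (hU hz hs)

theorem continuousOn_add_ofReal (hU : IsLeftStable U) (hf : ContinuousOn f U) (hz : z ∈ U) :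
    ContinuousOn (fun s : ℝ => f (z + s)) (Iic 0) :=
  hf.comp (by fun_prop) fun _ hs => hU hz hs

theorem integrableOn_add_ofReal (hU : IsLeftStable U) (hf : ContinuousOn f U)
    (hB : ∀ z ∈ U, ‖f z‖ ≤ B * ‖exp z‖) (hz : z ∈ U) :
    IntegrableOn (fun s : ℝ => f (z + s)) (Iic 0) :=
  ((integrableOn_exp_Iic 0).const_mul _).mono'
    ((continuousOn_add_ofReal hU hf hz).aestronglyMeasurable measurableSet_Iic)
    (ae_restrict_of_forall_mem measurableSet_Iic fun _ hs => norm_add_ofReal_le hU hB hz hs)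

variable [NormedSpace ℂ E]

/-- The primitive of `f` that vanishes at `-∞`, integrated along the horizontal ray ending at
`z`. -/
noncomputable def leftPrimitive (f : ℂ → E) (z : ℂ) : E :=
  ∫ s in Iic (0 : ℝ), f (z + s)

theorem norm_leftPrimitive_le (hU : IsLeftStable U) (hB : ∀ z ∈ U, ‖f z‖ ≤ B * ‖exp z‖)
    (hz : z ∈ U) : ‖leftPrimitive f z‖ ≤ B * ‖exp z‖ := by
  have h := norm_integral_le_of_norm_le ((integrableOn_exp_Iic 0).const_mul (B * ‖exp z‖))
    (ae_restrict_of_forall_mem measurableSet_Iic fun _ hs => norm_add_ofReal_le hU hB hz hs)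
  rwa [integral_const_mul, integral_exp_Iic_zero, mul_one] at h

theorem leftPrimitive_sub (hU : IsLeftStable U) (hf : ContinuousOn f U) (hg : ContinuousOn g U)
    (hBf : ∀ z ∈ U, ‖f z‖ ≤ B * ‖exp z‖) (hBg : ∀ z ∈ U, ‖g z‖ ≤ B * ‖exp z‖) (hz : z ∈ U) :
    leftPrimitive (f - g) z = leftPrimitive f z - leftPrimitive g z :=
  integral_sub (integrableOn_add_ofReal hU hf hBf hz) (integrableOn_add_ofReal hU hg hBg hz)

theorem hasDerivAt_add_ofReal (hUo : IsOpen U) (hU : IsLeftStable U)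
    (hf : DifferentiableOn ℂ f U) (hz : z ∈ U) {s : ℝ} (hs : s ≤ 0) :
    HasDerivAt (fun w => f (w + s)) (deriv f (z + s)) z :=
  (hf.differentiableAt (hUo.mem_nhds (hU hz hs))).hasDerivAt.comp_add_const z (s : ℂ)

theorem norm_deriv_add_ofReal_le (hU : IsLeftStable U) (hf : DifferentiableOn ℂ f U)
    (hB : ∀ z ∈ U, ‖f z‖ ≤ B * ‖exp z‖) {δ : ℝ} (hδ : 0 < δ)
    (hball : Metric.closedBall z δ ⊆ U) {s : ℝ} (hs : s ≤ 0) :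
    ‖deriv f (z + s)‖ ≤ B * Real.exp (z.re + δ) / δ * Real.exp s := by
  have hz : z ∈ U := hball (Metric.mem_closedBall_self hδ.le)
  have hB0 : 0 ≤ B :=
    nonneg_of_mul_nonneg_left ((norm_nonneg _).trans (hB z hz)) (norm_pos_iff.2 (exp_ne_zero z))
  have hball' : Metric.closedBall (z + s) δ ⊆ U := fun v hv => by
    have hv' : v - s ∈ Metric.closedBall z δ := by
      rwa [mem_closedBall_iff_norm, sub_right_comm, sub_sub, ← mem_closedBall_iff_norm]
    simpa using hU (hball hv') hs
  have hcauchy : ‖deriv f (z + s)‖ ≤ B * Real.exp (z.re + s + δ) / δ := by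
    refine Complex.norm_deriv_le_of_forall_mem_sphere_norm_le hδ
      (hf.mono (closure_ball (z + s : ℂ) hδ.ne' ▸ hball')).diffContOnCl fun v hv => ?_
    have hre : v.re - (z.re + s) ≤ δ := by
      simpa using (Complex.re_le_norm (v - (z + s))).trans (mem_sphere_iff_norm.1 hv).le
    refine (hB v (hball' (Metric.sphere_subset_closedBall hv))).trans ?_
    rw [Complex.norm_exp]
    gcongr
    linarith
  calc ‖deriv f (z + s)‖ ≤ B * Real.exp (z.re + s + δ) / δ := hcauchy
    _ = B * Real.exp (z.re + δ) / δ * Real.exp s := by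
      rw [show z.re + s + δ = z.re + δ + s by ring, Real.exp_add _ s]; ring

variable [CompleteSpace E]

theorem integral_deriv_add_ofReal (hUo : IsOpen U) (hU : IsLeftStable U)
    (hf : DifferentiableOn ℂ f U) (hB : ∀ z ∈ U, ‖f z‖ ≤ B * ‖exp z‖) (hz : z ∈ U)
    (hint : IntegrableOn (fun s : ℝ => deriv f (z + s)) (Iic 0)) :
    ∫ s in Iic (0 : ℝ), deriv f (z + s) = f z := by
  have hderiv : ∀ s ∈ Iic (0 : ℝ), HasDerivAt (fun t : ℝ => f (z + t)) (deriv f (z + s)) s :=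
    fun s hs => by
      have h := (hf.differentiableAt (hUo.mem_nhds (hU hz hs))).hasDerivAt
      simpa [Function.comp_def] using
        (h.comp_const_add z (s : ℂ)).scomp s Complex.ofRealCLM.hasDerivAt
  have hlim : Tendsto (fun s : ℝ => f (z + s)) atBot (𝓝 0) := by
    refine squeeze_zero_norm' (a := fun s => B * ‖exp z‖ * Real.exp s) ?_
      (by simpa using Real.tendsto_exp_atBot.const_mul (B * ‖exp z‖))
    filter_upwards [eventually_le_atBot 0] with s hs using norm_add_ofReal_le hU hB hz hs
  simpa using integral_Iic_of_hasDerivAt_of_tendsto' hderiv hint hlim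

theorem eq_zero_of_hasDerivAt_zero (hUo : IsOpen U) (hU : IsLeftStable U)
    (hf : ∀ z ∈ U, HasDerivAt f 0 z) (hB : ∀ z ∈ U, ‖f z‖ ≤ B * ‖exp z‖) (hz : z ∈ U) :
    f z = 0 := by
  have hderiv : EqOn (fun s : ℝ => deriv f (z + s)) 0 (Iic 0) := fun s hs => (hf _ (hU hz hs)).deriv
  rw [← integral_deriv_add_ofReal hUo hU
    (fun z hz => (hf z hz).differentiableAt.differentiableWithinAt) hB hz
    ((integrableOn_congr_fun hderiv measurableSet_Iic).2 integrableOn_zero),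
    setIntegral_congr_fun measurableSet_Iic hderiv]
  exact integral_zero _ _

theorem hasDerivAt_leftPrimitive (hUo : IsOpen U) (hU : IsLeftStable U)
    (hf : DifferentiableOn ℂ f U) (hB : ∀ z ∈ U, ‖f z‖ ≤ B * ‖exp z‖) (hz : z ∈ U) :
    HasDerivAt (leftPrimitive f) (f z) z := by
  obtain ⟨δ, hδ, hball⟩ := Metric.nhds_basis_closedBall.mem_iff.1 (hUo.mem_nhds hz)
  have hB0 : 0 ≤ B :=
    nonneg_of_mul_nonneg_left ((norm_nonneg _).trans (hB z hz)) (norm_pos_iff.2 (exp_ne_zero z))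
  have hderiv_le : ∀ s ∈ Iic (0 : ℝ), ∀ w ∈ Metric.ball z (δ / 2), ‖deriv f (w + s)‖ ≤
      B * Real.exp (z.re + δ) / (δ / 2) * Real.exp s := fun s hs w hw => by
    have hwz : ‖w - z‖ < δ / 2 := mem_ball_iff_norm.1 hw
    have hre : w.re - z.re ≤ ‖w - z‖ := by simpa using Complex.re_le_norm (w - z)
    refine (norm_deriv_add_ofReal_le hU hf hB (half_pos hδ)
      ((Metric.closedBall_subset_closedBall' ?_).trans hball) hs).trans ?_
    · rw [dist_eq_norm]; linarith
    · gcongr ?_ * Real.exp ?_ / _ * _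
      linarith
  obtain ⟨hint, hderiv⟩ := hasDerivAt_integral_of_dominated_loc_of_deriv_le
    (F := fun w (s : ℝ) => f (w + s)) (F' := fun w (s : ℝ) => deriv f (w + s))
    (Metric.ball_mem_nhds z (half_pos hδ))
    (by
      filter_upwards [hUo.mem_nhds hz] with w hw
      exact (continuousOn_add_ofReal hU hf.continuousOn hw).aestronglyMeasurable
        measurableSet_Iic)
    (integrableOn_add_ofReal hU hf.continuousOn hB hz)
    ((continuousOn_add_ofReal hU (hf.deriv hUo).continuousOn hz).aestronglyMeasurable
      measurableSet_Iic)
    (ae_restrict_of_forall_mem measurableSet_Iic hderiv_le)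
    ((integrableOn_exp_Iic 0).const_mul _)
    (ae_restrict_of_forall_mem measurableSet_Iic fun s hs w hw =>
      hasDerivAt_add_ofReal hUo hU hf (hball (Metric.ball_subset_closedBall
        (Metric.ball_subset_ball (half_le_self hδ.le) hw))) hs)
  rwa [integral_deriv_add_ofReal hUo hU hf hB hz hint] at hderiv

end LeftPrimitive

section FixedPoint

open Filter Topology Set

variable {α E : Type*} [NormedAddCommGroup E] [CompleteSpace E] {U : Set α} {ω : α → ℝ}
  {b K q : ℝ}

theorem exists_norm_sub_le_of_norm_sub_succ_le (hq1 : q < 1) {F : ℕ → α → E}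
    (hF : ∀ n, ∀ z ∈ U, ‖F n z - F (n + 1) z‖ ≤ K * q ^ n * ω z) :
    ∃ f : α → E, ∀ n, ∀ z ∈ U, ‖F n z - f z‖ ≤ K * q ^ n / (1 - q) * ω z := by
  have hdist {z} (hz : z ∈ U) (n) : dist (F n z) (F (n + 1) z) ≤ K * ω z * q ^ n := by
    rw [dist_eq_norm]
    exact (hF n z hz).trans_eq (by ring)
  have hlim : ∀ z ∈ U, ∃ a, Tendsto (fun n => F n z) atTop (𝓝 a) := fun z hz =>
    cauchySeq_tendsto_of_complete (cauchySeq_of_le_geometric q _ hq1 (hdist hz))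
  choose! f hf using hlim
  refine ⟨f, fun n z hz => ?_⟩
  rw [← dist_eq_norm]
  exact (dist_le_of_le_geometric_of_tendsto q _ hq1 (hdist hz) (hf z hz) n).trans_eq (by ring)

theorem exists_fixedPoint_of_weighted_contraction (hωb : ∀ z ∈ U, ω z ≤ b) (hK : 0 ≤ K)
    (hq0 : 0 ≤ q) (hq1 : q < 1) {S : Set (α → E)} {T : (α → E) → α → E} (hT : MapsTo T S S)
    (hcontr : ∀ f ∈ S, ∀ g ∈ S, ∀ k, (∀ z ∈ U, ‖f z - g z‖ ≤ k * ω z) →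
      ∀ z ∈ U, ‖T f z - T g z‖ ≤ q * k * ω z)
    (hclosed : ∀ (F : ℕ → α → E) (f : α → E), (∀ n, F n ∈ S) →
      TendstoUniformlyOn F f atTop U → f ∈ S)
    {f₀ : α → E} (hf₀ : f₀ ∈ S) (hK₀ : ∀ z ∈ U, ‖f₀ z - T f₀ z‖ ≤ K * ω z) :
    ∃ f ∈ S, EqOn (T f) f U := by
  let F : ℕ → α → E := fun n => T^[n] f₀
  have hF_succ (n) : F (n + 1) = T (F n) := Function.iterate_succ_apply' T n f₀
  have hF (n) : F n ∈ S := hT.iterate n hf₀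
  have hstep (n) : ∀ z ∈ U, ‖F n z - F (n + 1) z‖ ≤ K * q ^ n * ω z := by
    induction n with
    | zero => simpa [F] using hK₀
    | succ n ih =>
      intro z hz
      have h := hcontr _ (hF n) _ (hF (n + 1)) _ ih z hz
      rw [← hF_succ, ← hF_succ] at h
      exact h.trans_eq (by ring)
  obtain ⟨f, hf⟩ := exists_norm_sub_le_of_norm_sub_succ_le hq1 hstep
  have hgeom (c : ℝ) : Tendsto (fun n : ℕ => K * q ^ n / (1 - q) * c) atTop (𝓝 0) := by
    simpa using
      (((tendsto_pow_atTop_nhds_zero_of_lt_one hq0 hq1).const_mul K).div_const (1 - q)).mul_const c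
  have hunif : TendstoUniformlyOn F f atTop U := by
    refine Metric.tendstoUniformlyOn_iff.2 fun ε hε => ?_
    filter_upwards [(hgeom b).eventually (gt_mem_nhds hε)] with n hn z hz
    have : 0 < 1 - q := sub_pos.2 hq1
    rw [dist_comm, dist_eq_norm]
    calc ‖F n z - f z‖ ≤ K * q ^ n / (1 - q) * ω z := hf n z hz
      _ ≤ K * q ^ n / (1 - q) * b := by gcongr; exact hωb z hz
      _ < ε := hn
  have hfS : f ∈ S := hclosed F f hF hunif
  refine ⟨f, hfS, fun z hz =>
    tendsto_nhds_unique ?_ ((hunif.tendsto_at hz).comp (tendsto_add_atTop_nat 1))⟩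
  refine tendsto_iff_norm_sub_tendsto_zero.2 (squeeze_zero (fun _ => norm_nonneg _) (fun n => ?_)
    (by simpa using (hgeom (ω z)).const_mul q))
  rw [Function.comp_apply, hF_succ, ← mul_assoc]
  exact hcontr _ (hF n) _ hfS _ (hf n) z hz

end FixedPoint

section DecayingSolutions

open Filter Topology Set Metric
open scoped NNReal

variable {E : Type*} [NormedAddCommGroup E]

theorem norm_le_of_lipschitzOnWith_closedBall {f : E → E} {q : ℝ≥0} {m r : ℝ}
    (hf : LipschitzOnWith q f (closedBall 0 r)) (hf₀ : ‖f 0‖ ≤ (1 - q) * m) (hm : m ≤ r) {x : E}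
    (hx : ‖x‖ ≤ m) : ‖f x‖ ≤ m := by
  have h0 : (0 : E) ∈ closedBall (0 : E) r :=
    mem_closedBall_self ((norm_nonneg x).trans (hx.trans hm))
  have hxr : x ∈ closedBall (0 : E) r := mem_closedBall_zero_iff.2 (hx.trans hm)
  calc ‖f x‖ ≤ ‖f 0‖ + ‖f x - f 0‖ := norm_le_norm_add_norm_sub' _ _
    _ ≤ (1 - q) * m + q * m := by
      gcongr
      exact (hf.norm_sub_le hxr h0).trans (by rw [sub_zero]; gcongr)
    _ = m := by ring

variable [NormedSpace ℂ E] [CompleteSpace E] {U : Set ℂ}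

theorem differentiableOn_norm_le_of_tendstoUniformlyOn (hUo : IsOpen U) {ω : ℂ → ℝ}
    {F : ℕ → ℂ → E} {f : ℂ → E}
    (hF : ∀ n, DifferentiableOn ℂ (F n) U ∧ ∀ z ∈ U, ‖F n z‖ ≤ ω z)
    (hf : TendstoUniformlyOn F f atTop U) :
    DifferentiableOn ℂ f U ∧ ∀ z ∈ U, ‖f z‖ ≤ ω z :=
  ⟨hf.tendstoLocallyUniformlyOn.differentiableOn (Eventually.of_forall fun n => (hF n).1) hUo,
    fun z hz =>
      le_of_tendsto (hf.tendsto_at hz).norm (Eventually.of_forall fun n => (hF n).2 z hz)⟩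

theorem exists_hasDerivAt_of_lipschitzOnWith (hUo : IsOpen U) (hU : IsLeftStable U)
    {F : ℂ → E → E} {M r : ℝ} {q : ℝ≥0} (hM : 0 < M) (hq : q < 1)
    (hF₀ : ∀ z ∈ U, ‖F z 0‖ ≤ (1 - q) * (M * ‖exp z‖))
    (hlip : ∀ z ∈ U, LipschitzOnWith q (F z) (closedBall 0 r))
    (hdiff : DifferentiableOn ℂ (Function.uncurry F) (U ×ˢ closedBall 0 r))
    (hr : ∀ z ∈ U, M * ‖exp z‖ ≤ r) :
    ∃ X : ℂ → E, ∀ z ∈ U, ‖X z‖ ≤ M * ‖exp z‖ ∧ HasDerivAt X (F z (X z)) z := by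
  let S : Set (ℂ → E) := {X | DifferentiableOn ℂ X U ∧ ∀ z ∈ U, ‖X z‖ ≤ M * ‖exp z‖}
  let T : (ℂ → E) → ℂ → E := fun X => leftPrimitive fun z => F z (X z)
  have hball {X} (hX : X ∈ S) {z} (hz : z ∈ U) : X z ∈ closedBall 0 r :=
    mem_closedBall_zero_iff.2 ((hX.2 z hz).trans (hr z hz))
  have hF_diff {X} (hX : X ∈ S) : DifferentiableOn ℂ (fun z => F z (X z)) U :=
    hdiff.comp (differentiableOn_id.prodMk hX.1) fun z hz => ⟨hz, hball hX hz⟩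
  have hF_le {X} (hX : X ∈ S) : ∀ z ∈ U, ‖F z (X z)‖ ≤ M * ‖exp z‖ := fun z hz =>
    norm_le_of_lipschitzOnWith_closedBall (hlip z hz) (hF₀ z hz) (hr z hz) (hX.2 z hz)
  have hT_deriv {X} (hX : X ∈ S) : ∀ z ∈ U, HasDerivAt (T X) (F z (X z)) z := fun z hz =>
    hasDerivAt_leftPrimitive hUo hU (hF_diff hX) (hF_le hX) hz
  have hT : MapsTo T S S := fun X hX =>
    ⟨fun z hz => (hT_deriv hX z hz).differentiableAt.differentiableWithinAt,
      fun z hz => norm_leftPrimitive_le hU (hF_le hX) hz⟩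
  have hcontr : ∀ X ∈ S, ∀ Y ∈ S, ∀ k, (∀ z ∈ U, ‖X z - Y z‖ ≤ k * ‖exp z‖) →
      ∀ z ∈ U, ‖T X z - T Y z‖ ≤ q * k * ‖exp z‖ := fun X hX Y hY k hk z hz => by
    rw [← leftPrimitive_sub hU (hF_diff hX).continuousOn (hF_diff hY).continuousOn (hF_le hX)
      (hF_le hY) hz]
    refine norm_leftPrimitive_le hU (fun w hw => ?_) hz
    calc ‖F w (X w) - F w (Y w)‖ ≤ q * ‖X w - Y w‖ :=
        (hlip w hw).norm_sub_le (hball hX hw) (hball hY hw)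
      _ ≤ q * k * ‖exp w‖ := by rw [mul_assoc]; gcongr; exact hk w hw
  have h0S : 0 ∈ S :=
    ⟨differentiableOn_const 0, fun z _ => by rw [Pi.zero_apply, norm_zero]; positivity⟩
  obtain ⟨X, hX, hfix⟩ := exists_fixedPoint_of_weighted_contraction
    (fun z hz => (le_div_iff₀' hM).2 (hr z hz)) hM.le q.2 (by exact_mod_cast hq) hT hcontr
    (fun F f hF hf => differentiableOn_norm_le_of_tendstoUniformlyOn hUo hF hf) h0S
    (fun z hz => by simpa using (hT h0S).2 z hz)
  refine ⟨X, fun z hz => ⟨hX.2 z hz, (hT_deriv hX z hz).congr_of_eventuallyEq ?_⟩⟩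
  filter_upwards [hUo.mem_nhds hz] with w hw using (hfix hw).symm

end DecayingSolutions

section Triangular

open Set Metric

variable {E₁ E₂ : Type*} [NormedAddCommGroup E₁] [NormedSpace ℂ E₁] [NormedAddCommGroup E₂]
  [NormedSpace ℂ E₂] {U : Set ℂ} {c : ℂ}

/-- The linear map `(x₁, x₂) ↦ (x₁, c x₂)`, used to rescale the second component of a system. -/
def scaleSnd (c : ℂ) : E₁ × E₂ →L[ℂ] E₁ × E₂ :=
  (ContinuousLinearMap.id ℂ E₁).prodMap (c • ContinuousLinearMap.id ℂ E₂)

@[simp]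
theorem scaleSnd_apply (c : ℂ) (x : E₁ × E₂) : scaleSnd c x = (x.1, c • x.2) := rfl

theorem scaleSnd_inv_scaleSnd (hc : c ≠ 0) (x : E₁ × E₂) : scaleSnd c⁻¹ (scaleSnd c x) = x := by
  simp [hc]

theorem norm_scaleSnd_le (hc : 1 ≤ ‖c‖) (x : E₁ × E₂) : ‖scaleSnd c x‖ ≤ ‖c‖ * ‖x‖ := by
  refine norm_prod_le_iff.2 ⟨(norm_fst_le x).trans (le_mul_of_one_le_left (norm_nonneg x) hc), ?_⟩
  rw [scaleSnd_apply, norm_smul]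
  gcongr
  exact norm_snd_le x

theorem norm_scaleSnd_inv_le (hc : 1 ≤ ‖c‖) (x : E₁ × E₂) : ‖scaleSnd c⁻¹ x‖ ≤ ‖x‖ := by
  refine norm_prod_le_iff.2 ⟨norm_fst_le x, ?_⟩
  rw [scaleSnd_apply, norm_smul, norm_inv]
  exact (mul_le_of_le_one_left (norm_nonneg _) (inv_le_one_of_one_le₀ hc)).trans (norm_snd_le x)

theorem scaleSnd_inv_mem_closedBall (hc : 1 ≤ ‖c‖) {r : ℝ} {x : E₁ × E₂}
    (hx : x ∈ closedBall 0 r) : scaleSnd c⁻¹ x ∈ closedBall 0 r :=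
  mem_closedBall_zero_iff.2 ((norm_scaleSnd_inv_le hc x).trans (mem_closedBall_zero_iff.1 hx))

-- Shrinking the second component by `4 * L` absorbs the constant `L`, which need not be small.
theorem norm_scaleSnd_sub_le {L q r : ℝ} (hL : 1 ≤ L) (hq : 0 ≤ q) (hLq : 8 * L * q ≤ 1)
    (hc : ‖c‖ = 4 * L) {f : E₁ × E₂ → E₁ × E₂}
    (hf₁ : ∀ x ∈ closedBall 0 r, ∀ y ∈ closedBall 0 r,
      ‖(f x).1 - (f y).1‖ ≤ L * ‖x.2 - y.2‖ + q * ‖x - y‖)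
    (hf₂ : ∀ x ∈ closedBall 0 r, ∀ y ∈ closedBall 0 r, ‖(f x).2 - (f y).2‖ ≤ q * ‖x - y‖)
    {x y : E₁ × E₂} (hx : x ∈ closedBall 0 r) (hy : y ∈ closedBall 0 r) :
    ‖scaleSnd c (f (scaleSnd c⁻¹ x)) - scaleSnd c (f (scaleSnd c⁻¹ y))‖ ≤ 1 / 2 * ‖x - y‖ := by
  have hc1 : 1 ≤ ‖c‖ := by linarith
  have hx' := scaleSnd_inv_mem_closedBall hc1 hx
  have hy' := scaleSnd_inv_mem_closedBall hc1 hy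
  have hsub : ‖scaleSnd c⁻¹ x - scaleSnd c⁻¹ y‖ ≤ ‖x - y‖ := by
    rw [← map_sub]
    exact norm_scaleSnd_inv_le hc1 _
  have hsnd : L * ‖(scaleSnd c⁻¹ x).2 - (scaleSnd c⁻¹ y).2‖ ≤ 1 / 4 * ‖x - y‖ := by
    have h : ‖x.2 - y.2‖ ≤ ‖x - y‖ := norm_snd_le (x - y)
    simp only [scaleSnd_apply, ← smul_sub, norm_smul, norm_inv, hc]
    field_simp
    exact h
  rw [← map_sub]
  refine norm_prod_le_iff.2 ⟨?_, ?_⟩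
  · calc ‖(f (scaleSnd c⁻¹ x)).1 - (f (scaleSnd c⁻¹ y)).1‖
        ≤ 1 / 4 * ‖x - y‖ + q * ‖x - y‖ :=
        (hf₁ _ hx' _ hy').trans (add_le_add hsnd (by gcongr))
      _ ≤ 1 / 2 * ‖x - y‖ := by
        rw [← add_mul]
        gcongr
        nlinarith
  · rw [scaleSnd_apply, norm_smul, hc]
    calc 4 * L * ‖(f (scaleSnd c⁻¹ x)).2 - (f (scaleSnd c⁻¹ y)).2‖
        ≤ 4 * L * (q * ‖x - y‖) := by gcongr; exact (hf₂ _ hx' _ hy').trans (by gcongr)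
      _ = 8 * L * q * (1 / 2 * ‖x - y‖) := by ring
      _ ≤ 1 / 2 * ‖x - y‖ := mul_le_of_le_one_left (by positivity) hLq

variable [CompleteSpace E₁] [CompleteSpace E₂]

theorem exists_hasDerivAt_of_triangular (hUo : IsOpen U) (hU : IsLeftStable U)
    {F : ℂ → E₁ × E₂ → E₁ × E₂} {K L q r : ℝ} (hK : 0 < K) (hL : 1 ≤ L) (hq : 0 ≤ q)
    (hLq : 8 * L * q ≤ 1) (hF₀ : ∀ z ∈ U, ‖F z 0‖ ≤ K * ‖exp z‖)
    (hF₁ : ∀ z ∈ U, ∀ x ∈ closedBall 0 r, ∀ y ∈ closedBall 0 r,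
      ‖(F z x).1 - (F z y).1‖ ≤ L * ‖x.2 - y.2‖ + q * ‖x - y‖)
    (hF₂ : ∀ z ∈ U, ∀ x ∈ closedBall 0 r, ∀ y ∈ closedBall 0 r,
      ‖(F z x).2 - (F z y).2‖ ≤ q * ‖x - y‖)
    (hdiff : DifferentiableOn ℂ (Function.uncurry F) (U ×ˢ closedBall 0 r))
    (hr : ∀ z ∈ U, 8 * L * K * ‖exp z‖ ≤ r) :
    ∃ X : ℂ → E₁ × E₂, ∀ z ∈ U, ‖X z‖ ≤ 8 * L * K * ‖exp z‖ ∧ HasDerivAt X (F z (X z)) z := by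
  obtain ⟨c, hc⟩ : ∃ c : ℂ, ‖c‖ = 4 * L := ⟨(4 * L : ℝ), Complex.norm_of_nonneg (by linarith)⟩
  have hc1 : 1 ≤ ‖c‖ := by linarith
  have hc0 : c ≠ 0 := norm_pos_iff.1 (by linarith)
  let G : ℂ → E₁ × E₂ → E₁ × E₂ := fun z x => scaleSnd c (F z (scaleSnd c⁻¹ x))
  have hG₀ : ∀ z ∈ U, ‖G z 0‖ ≤ (1 - (1 / 2 : NNReal)) * (8 * L * K * ‖exp z‖) := fun z hz =>
    calc ‖G z 0‖ ≤ ‖c‖ * ‖F z 0‖ := by simpa only [G, map_zero] using norm_scaleSnd_le hc1 (F z 0)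
      _ ≤ 4 * L * (K * ‖exp z‖) := by rw [hc]; gcongr; exact hF₀ z hz
      _ = (1 - (1 / 2 : NNReal)) * (8 * L * K * ‖exp z‖) := by push_cast; ring
  have hG : ∀ z ∈ U, LipschitzOnWith (1 / 2) (G z) (closedBall 0 r) := fun z hz =>
    LipschitzOnWith.of_dist_le_mul fun x hx y hy => by
      simpa [dist_eq_norm, G, -scaleSnd_apply] using
        norm_scaleSnd_sub_le hL hq hLq hc (hF₁ z hz) (hF₂ z hz) hx hy
  have hmap : DifferentiableOn ℂ (fun p : ℂ × E₁ × E₂ => (p.1, scaleSnd c⁻¹ p.2))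
      (U ×ˢ closedBall 0 r) := by fun_prop
  have hGdiff : DifferentiableOn ℂ (Function.uncurry G) (U ×ˢ closedBall 0 r) :=
    (scaleSnd (E₁ := E₁) (E₂ := E₂) c).differentiable.comp_differentiableOn
      (hdiff.comp hmap fun p hp => ⟨hp.1, scaleSnd_inv_mem_closedBall hc1 hp.2⟩)
  obtain ⟨Y, hY⟩ := exists_hasDerivAt_of_lipschitzOnWith hUo hU (by positivity)
    one_half_lt_one hG₀ hG hGdiff hr
  refine ⟨fun z => scaleSnd c⁻¹ (Y z), fun z hz =>
    ⟨(norm_scaleSnd_inv_le hc1 _).trans (hY z hz).1, ?_⟩⟩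
  have hderiv := (scaleSnd c⁻¹).hasFDerivAt.comp_hasDerivAt z (hY z hz).2
  rwa [scaleSnd_inv_scaleSnd hc0] at hderiv

end Triangular

section HalfStrip

/-- The left half-strip of points with real part less than `ρ` and imaginary part less than `d` in
absolute value. -/
def halfStrip (ρ d : ℝ) : Set ℂ := {z | z.re < ρ ∧ |z.im| < d}

variable {ρ ρ' d : ℝ} {z : ℂ}

theorem isOpen_halfStrip : IsOpen (halfStrip ρ d) :=
  (isOpen_lt continuous_re continuous_const).inter
    (isOpen_lt continuous_im.abs continuous_const)

theorem isLeftStable_halfStrip : IsLeftStable (halfStrip ρ d) := fun z hz s hs =>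
  ⟨by simpa using (add_le_of_nonpos_right hs).trans_lt hz.1, by simpa using hz.2⟩

theorem halfStrip_mono (h : ρ ≤ ρ') : halfStrip ρ d ⊆ halfStrip ρ' d :=
  fun _ hz => ⟨hz.1.trans_le h, hz.2⟩

theorem norm_exp_lt_of_mem_halfStrip {τ : ℝ} (hτ : 0 < τ) (hz : z ∈ halfStrip (Real.log τ) d) :
    ‖exp z‖ < τ := by
  rw [Complex.norm_exp, ← Real.lt_log_iff_exp_lt hτ]
  exact hz.1

end HalfStrip

section TriangularField

open Set Metric

variable {E₁ E₂ : Type*} [NormedAddCommGroup E₁] [NormedSpace ℂ E₁] [NormedAddCommGroup E₂]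
  [NormedSpace ℂ E₂]

/-- The field `X ↦ (j(X) X₂, 0) + x γ(X)`: linear coupling of the first component to the second,
perturbed by a term of size `x`. -/
def triangularField (j : E₁ × E₂ → E₂ →L[ℂ] E₁) (γ : E₁ × E₂ → E₁ × E₂) (x : ℂ) (X : E₁ × E₂) :
    E₁ × E₂ :=
  (j X X.2, 0) + x • γ X

variable {j : E₁ × E₂ → E₂ →L[ℂ] E₁} {γ : E₁ × E₂ → E₁ × E₂} {L r τ : ℝ} {x : ℂ} {X Y : E₁ × E₂}

theorem norm_triangularField_zero_le (hγ : ‖γ 0‖ ≤ L) :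
    ‖triangularField j γ x 0‖ ≤ L * ‖x‖ := by
  rw [triangularField, Prod.snd_zero, map_zero, Prod.mk_zero_zero, zero_add, norm_smul, mul_comm]
  gcongr

theorem norm_smul_sub_smul_le (hγ : ‖γ X - γ Y‖ ≤ L * ‖X - Y‖) (hx : ‖x‖ ≤ τ) :
    ‖x • (γ X - γ Y)‖ ≤ τ * L * ‖X - Y‖ := by
  rw [norm_smul, mul_assoc]
  exact mul_le_mul hx hγ (norm_nonneg _) ((norm_nonneg x).trans hx)

theorem norm_triangularField_sub_fst_le (hj : ‖j X‖ ≤ L) (hjXY : ‖j X - j Y‖ ≤ L * ‖X - Y‖)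
    (hγ : ‖γ X - γ Y‖ ≤ L * ‖X - Y‖) (hx : ‖x‖ ≤ τ) (hY : ‖Y‖ ≤ r) :
    ‖(triangularField j γ x X).1 - (triangularField j γ x Y).1‖
      ≤ L * ‖X.2 - Y.2‖ + (r + τ) * L * ‖X - Y‖ := by
  have hsplit : (triangularField j γ x X).1 - (triangularField j γ x Y).1
      = j X (X.2 - Y.2) + (j X - j Y) Y.2 + (x • (γ X - γ Y)).1 := by
    simp only [triangularField, Prod.fst_add, Prod.smul_fst, map_sub, Prod.fst_sub, smul_sub,
      sub_apply]
    abel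
  have h₁ : ‖j X (X.2 - Y.2)‖ ≤ L * ‖X.2 - Y.2‖ := (j X).le_of_opNorm_le hj _
  have h₂ : ‖(j X - j Y) Y.2‖ ≤ L * ‖X - Y‖ * r :=
    ((j X - j Y).le_of_opNorm_le hjXY _).trans
      (mul_le_mul_of_nonneg_left ((norm_snd_le Y).trans hY) ((norm_nonneg _).trans hjXY))
  have h₃ := (norm_fst_le _).trans (norm_smul_sub_smul_le hγ hx)
  rw [hsplit]
  calc _ ≤ L * ‖X.2 - Y.2‖ + L * ‖X - Y‖ * r + τ * L * ‖X - Y‖ :=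
      norm_add₃_le.trans (add_le_add_three h₁ h₂ h₃)
    _ = L * ‖X.2 - Y.2‖ + (r + τ) * L * ‖X - Y‖ := by ring

theorem norm_triangularField_sub_snd_le (hγ : ‖γ X - γ Y‖ ≤ L * ‖X - Y‖)
    (hx : ‖x‖ ≤ τ) :
    ‖(triangularField j γ x X).2 - (triangularField j γ x Y).2‖ ≤ τ * L * ‖X - Y‖ := by
  simpa [triangularField, smul_sub] using
    (norm_snd_le _).trans (norm_smul_sub_smul_le hγ hx)

end TriangularField

section AnalyticSystem

open Set Metric

theorem exists_norm_le_and_norm_sub_le {V V' : Type*} [NormedAddCommGroup V] [NormedSpace ℂ V]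
    [NormedAddCommGroup V'] [NormedSpace ℂ V'] {K : Set V} {H : V → V'} (hK : IsCompact K)
    (hKc : Convex ℝ K) (hH : ContDiffOn ℂ 1 H K) :
    ∃ L : ℝ, 1 ≤ L ∧ (∀ p ∈ K, ‖H p‖ ≤ L) ∧ ∀ p ∈ K, ∀ p' ∈ K, ‖H p - H p'‖ ≤ L * ‖p - p'‖ := by
  obtain ⟨B, hB⟩ := hK.exists_bound_of_continuousOn hH.continuousOn
  obtain ⟨L, hL⟩ := (hH.restrict_scalars ℝ).exists_lipschitzOnWith one_ne_zero hKc hK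
  refine ⟨max 1 (max B L), le_max_left _ _, fun p hp => (hB p hp).trans (by simp), ?_⟩
  intro p hp p' hp'
  refine (hL.norm_sub_le hp hp').trans ?_
  gcongr
  simp

theorem exists_closedBall_prod_subset {Λ V : Type*} [NormedAddCommGroup Λ] [NormedAddCommGroup V]
    {K : Set Λ} (hK : IsCompact K) {W : Set (ℂ × Λ × V)} (hW : IsOpen W)
    (hKW : ∀ l ∈ K, (0, l, 0) ∈ W) :
    ∃ δ > 0, closedBall 0 δ ×ˢ K ×ˢ closedBall 0 δ ⊆ W := by
  have hK₀ : IsCompact ({(0 : ℂ)} ×ˢ K ×ˢ {(0 : V)}) :=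
    isCompact_singleton.prod (hK.prod isCompact_singleton)
  obtain ⟨δ, hδ, hδW⟩ := hK₀.exists_cthickening_subset_open hW
    (by rintro ⟨_, l, _⟩ ⟨rfl, hl, rfl⟩; exact hKW l hl)
  refine ⟨δ, hδ, fun p hp => hδW (mem_cthickening_of_dist_le p (0, p.2.1, 0) δ _
    ⟨rfl, hp.2.1, rfl⟩ ?_)⟩
  simpa [Prod.dist_eq, hδ.le] using And.intro hp.1 hp.2.2

theorem exists_uniform_bound_of_contDiffOn {Λ V V' : Type*} [NormedAddCommGroup Λ]
    [NormedSpace ℂ Λ] [NormedAddCommGroup V] [NormedSpace ℂ V] [ProperSpace V]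
    [NormedAddCommGroup V'] [NormedSpace ℂ V'] {K : Set Λ} {W : Set (ℂ × Λ × V)}
    {H : ℂ × Λ × V → V'} (hK : IsCompact K) (hKc : Convex ℝ K) (hW : IsOpen W)
    (hKW : ∀ l ∈ K, (0, l, 0) ∈ W) (hH : ContDiffOn ℂ 1 H W) :
    ∃ δ > 0, ∃ L : ℝ, 1 ≤ L ∧ ∀ x ∈ closedBall 0 δ, ∀ l ∈ K, ∀ X ∈ closedBall 0 δ,
      (x, l, X) ∈ W ∧ ‖H (x, l, X)‖ ≤ L ∧
        ∀ Y ∈ closedBall 0 δ, ‖H (x, l, X) - H (x, l, Y)‖ ≤ L * ‖X - Y‖ := by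
  obtain ⟨δ, hδ, hδW⟩ := exists_closedBall_prod_subset hK hW hKW
  obtain ⟨L, hL, hbound, hlip⟩ := exists_norm_le_and_norm_sub_le
    ((isCompact_closedBall 0 δ).prod (hK.prod (isCompact_closedBall 0 δ)))
    ((convex_closedBall 0 δ).prod (hKc.prod (convex_closedBall 0 δ))) (hH.mono hδW)
  refine ⟨δ, hδ, L, hL, fun x hx l hl X hX => ?_⟩
  have hXK : (x, l, X) ∈ closedBall 0 δ ×ˢ K ×ˢ closedBall 0 δ := ⟨hx, hl, hX⟩
  refine ⟨hδW hXK, hbound _ hXK, fun Y hY => ?_⟩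
  simpa [Prod.norm_def] using hlip _ hXK (x, l, Y) ⟨hx, hl, hY⟩

theorem exists_smallness_radii {δ L : ℝ} (hδ : 0 < δ) (hL : 1 ≤ L) :
    ∃ r τ : ℝ, 0 < τ ∧ τ ≤ r ∧ r ≤ δ ∧ τ < 1 ∧ 8 * L * ((r + τ) * L) ≤ 1 ∧
      8 * L * L * τ ≤ r := by
  have hr : 0 < min δ (1 / (16 * L ^ 2)) := lt_min hδ (by positivity)
  have hrL : 16 * L ^ 2 * min δ (1 / (16 * L ^ 2)) ≤ 1 := by
    rw [← le_div_iff₀' (by positivity)]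
    exact min_le_right _ _
  set r := min δ (1 / (16 * L ^ 2))
  have hτ : r / (8 * L ^ 2) ≤ r := div_le_self hr.le (by nlinarith)
  refine ⟨r, r / (8 * L ^ 2), by positivity, hτ, min_le_left _ _, by nlinarith, by nlinarith, ?_⟩
  field_simp
  rfl

variable {Λ E₁ E₂ : Type*} [NormedAddCommGroup Λ] [NormedSpace ℂ Λ]
  [NormedAddCommGroup E₁] [NormedSpace ℂ E₁] [NormedAddCommGroup E₂]
  [NormedSpace ℂ E₂]

theorem differentiableOn_triangularField {U : Set ℂ} {S : Set (E₁ × E₂)} {lam : ℂ → Λ}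
    {W : Set (ℂ × Λ × (E₁ × E₂))} {J : ℂ × Λ × (E₁ × E₂) → E₂ →L[ℂ] E₁}
    {Γ : ℂ × Λ × (E₁ × E₂) → E₁ × E₂} (hlam : Differentiable ℂ lam)
    (hJ : DifferentiableOn ℂ J W) (hΓ : DifferentiableOn ℂ Γ W)
    (hW : ∀ z ∈ U, ∀ X ∈ S, (exp z, lam z, X) ∈ W) :
    DifferentiableOn ℂ (Function.uncurry fun z => triangularField
      (fun X => J (exp z, lam z, X)) (fun X => Γ (exp z, lam z, X)) (exp z)) (U ×ˢ S) := by
  have hp : DifferentiableOn ℂ (fun p : ℂ × (E₁ × E₂) => (exp p.1, lam p.1, p.2)) (U ×ˢ S) := by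
    fun_prop
  have hpW : Set.MapsTo (fun p : ℂ × (E₁ × E₂) => (exp p.1, lam p.1, p.2)) (U ×ˢ S) W :=
    fun p hp => hW p.1 hp.1 p.2 hp.2
  exact (((hJ.comp hp hpW).clm_apply differentiable_snd.snd.differentiableOn).prodMk
    (differentiableOn_const (0 : E₂))).add
      (differentiable_fst.cexp.differentiableOn.smul (hΓ.comp hp hpW))

variable [ProperSpace E₁] [ProperSpace E₂]

theorem exists_hasDerivAt_triangularField {d : ℝ} {lam : ℂ → Λ} {K : Set Λ}
    {W : Set (ℂ × Λ × (E₁ × E₂))} {J : ℂ × Λ × (E₁ × E₂) → E₂ →L[ℂ] E₁}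
    {Γ : ℂ × Λ × (E₁ × E₂) → E₁ × E₂} (hlam : Differentiable ℂ lam)
    (hlamK : ∀ z ∈ halfStrip 0 d, lam z ∈ K) (hK : IsCompact K) (hKc : Convex ℝ K) (hW : IsOpen W)
    (hKW : ∀ l ∈ K, (0, l, 0) ∈ W) (hJ : ContDiffOn ℂ 1 J W) (hΓ : ContDiffOn ℂ 1 Γ W) :
    ∃ ρ < 0, ∃ C > 0, ∃ X : ℂ → E₁ × E₂, ∀ z ∈ halfStrip ρ d,
      ‖X z‖ ≤ C * ‖exp z‖ ∧ (exp z, lam z, X z) ∈ W ∧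
        HasDerivAt X (triangularField (fun Y => J (exp z, lam z, Y)) (fun Y => Γ (exp z, lam z, Y))
          (exp z) (X z)) z := by
  obtain ⟨δ, hδ, L, hL, hbound⟩ :=
    exists_uniform_bound_of_contDiffOn hK hKc hW hKW (hJ.prodMk hΓ)
  obtain ⟨r, τ, hτ, hτr, hrδ, hτ1, hq, hr⟩ := exists_smallness_radii hδ hL
  have hL0 : 0 < L := zero_lt_one.trans_le hL
  have hr0 : 0 < r := hτ.trans_le hτr
  set U := halfStrip (Real.log τ) d
  have hball : closedBall (0 : E₁ × E₂) r ⊆ closedBall 0 δ := closedBall_subset_closedBall hrδ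
  have hexp : ∀ z ∈ U, ‖exp z‖ ≤ τ := fun z hz => (norm_exp_lt_of_mem_halfStrip hτ hz).le
  have hUb {z} (hz : z ∈ U) := hbound (exp z)
    (mem_closedBall_zero_iff.2 ((hexp z hz).trans (hτr.trans hrδ))) (lam z)
    (hlamK z (halfStrip_mono (Real.log_neg hτ hτ1).le hz))
  let F : ℂ → E₁ × E₂ → E₁ × E₂ := fun z =>
    triangularField (fun Y => J (exp z, lam z, Y)) (fun Y => Γ (exp z, lam z, Y)) (exp z)
  have hF₀ : ∀ z ∈ U, ‖F z 0‖ ≤ L * ‖exp z‖ := fun z hz => norm_triangularField_zero_le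
    ((norm_snd_le _).trans (hUb hz 0 (mem_closedBall_self hδ.le)).2.1)
  have hF₁ : ∀ z ∈ U, ∀ X ∈ closedBall 0 r, ∀ Y ∈ closedBall 0 r,
      ‖(F z X).1 - (F z Y).1‖ ≤ L * ‖X.2 - Y.2‖ + (r + τ) * L * ‖X - Y‖ := fun z hz X hX Y hY => by
    have ⟨_, hbd, hlip⟩ := hUb hz X (hball hX)
    have hlip := norm_prod_le_iff.1 (hlip Y (hball hY))
    exact norm_triangularField_sub_fst_le ((norm_fst_le _).trans hbd) hlip.1 hlip.2 (hexp z hz)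
      (mem_closedBall_zero_iff.1 hY)
  have hF₂ : ∀ z ∈ U, ∀ X ∈ closedBall 0 r, ∀ Y ∈ closedBall 0 r,
      ‖(F z X).2 - (F z Y).2‖ ≤ (r + τ) * L * ‖X - Y‖ := fun z hz X hX Y hY => by
    have hlip := norm_prod_le_iff.1 ((hUb hz X (hball hX)).2.2 Y (hball hY))
    refine (norm_triangularField_sub_snd_le hlip.2 (hexp z hz)).trans ?_
    gcongr
    linarith
  have hFdiff : DifferentiableOn ℂ (Function.uncurry F) (U ×ˢ closedBall 0 r) :=
    differentiableOn_triangularField hlam (hJ.differentiableOn one_ne_zero)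
      (hΓ.differentiableOn one_ne_zero) fun z hz X hX => (hUb hz X (hball hX)).1
  have hexp_le : ∀ z ∈ U, 8 * L * L * ‖exp z‖ ≤ r := fun z hz =>
    (by gcongr; exact hexp z hz : 8 * L * L * ‖exp z‖ ≤ 8 * L * L * τ).trans hr
  obtain ⟨X, hX⟩ := exists_hasDerivAt_of_triangular isOpen_halfStrip isLeftStable_halfStrip hL0 hL
    (by positivity) hq hF₀ hF₁ hF₂ hFdiff hexp_le
  refine ⟨Real.log τ, Real.log_neg hτ hτ1, 8 * L * L, by positivity, X, fun z hz => ?_⟩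
  have hXr : X z ∈ closedBall 0 r :=
    mem_closedBall_zero_iff.2 ((hX z hz).1.trans (hexp_le z hz))
  exact ⟨(hX z hz).1, (hUb hz (X z) (hball hXr)).1, (hX z hz).2⟩

end AnalyticSystem

section Oscillator

open Set Metric

theorem norm_exp_mul_I_le (w : ℂ) : ‖exp (w * I)‖ ≤ Real.exp |w.im| := by
  rw [Complex.norm_exp, Real.exp_le_exp]
  simpa using neg_le_abs w.im

theorem norm_exp_neg_mul_I_le (w : ℂ) : ‖exp (-w * I)‖ ≤ Real.exp |w.im| := by
  simpa using norm_exp_mul_I_le (-w)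

theorem norm_cos_le (w : ℂ) : ‖cos w‖ ≤ Real.exp |w.im| := by
  rw [Complex.cos, norm_div, Complex.norm_two]
  linarith [norm_add_le (exp (w * I)) (exp (-w * I)), norm_exp_mul_I_le w,
    norm_exp_neg_mul_I_le w]

theorem norm_sin_le (w : ℂ) : ‖sin w‖ ≤ Real.exp |w.im| := by
  rw [Complex.sin, norm_div, norm_mul, Complex.norm_I, Complex.norm_two]
  linarith [norm_sub_le (exp (-w * I)) (exp (w * I)), norm_exp_mul_I_le w,
    norm_exp_neg_mul_I_le w]

/-- The pair `(cos (ν z + κ), sin (ν z + κ))`. -/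
noncomputable def cosSin (ν κ z : ℂ) : ℂ × ℂ := (cos (ν * z + κ), sin (ν * z + κ))

theorem differentiable_cosSin (ν κ : ℂ) : Differentiable ℂ (cosSin ν κ) := by
  unfold cosSin
  fun_prop

theorem norm_cosSin_le {d : ℝ} (ν : ℝ) (κ : ℂ) {z : ℂ} (hz : |z.im| ≤ d) :
    ‖cosSin ν κ z‖ ≤ Real.exp (|ν| * d + |κ.im|) := by
  have him : |(ν * z + κ).im| ≤ |ν| * d + |κ.im| := by
    rw [add_im, im_ofReal_mul]
    refine (abs_add_le _ _).trans ?_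
    rw [abs_mul]
    gcongr
  have hexp := Real.exp_le_exp.2 him
  exact norm_prod_le_iff.2 ⟨(norm_cos_le _).trans hexp, (norm_sin_le _).trans hexp⟩

/-- The vector field of the oscillator `w' = P`, `P' = -E w`, `E' = 0` in the variables
`(w, P, E)`. -/
def oscillatorField (Y : ℂ × ℂ × ℂ) : ℂ × ℂ × ℂ := (Y.2.1, -Y.2.2 * Y.1, 0)

/-- Variation of constants for the oscillator: the state `(w, P, E)` whose coordinates relative to
the solution `(R sin τ, ν R cos τ, ν ^ 2)` are `((a, b), e)`, where `l = (cos τ, sin τ)`. -/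
def oscillatorState (ν R : ℂ) (l : ℂ × ℂ) (X : (ℂ × ℂ) × ℂ) : ℂ × ℂ × ℂ :=
  ((R + X.1.2) * l.2 + X.1.1 * l.1, ν * ((R + X.1.2) * l.1 - X.1.1 * l.2), ν ^ 2 + X.2)

/-- The inverse of the linear map `(a, b) ↦ (b s + a c, ν (b c - a s))`, where `l = (c, s)` and
`c ^ 2 + s ^ 2 = 1`. -/
noncomputable def unrotate (ν : ℂ) (l f : ℂ × ℂ) : ℂ × ℂ :=
  (l.1 * f.1 - l.2 * f.2 / ν, l.2 * f.1 + l.1 * f.2 / ν)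

variable {ν R κ z : ℂ} {l : ℂ × ℂ}

theorem hasDerivAt_oscillatorState (hν : ν ≠ 0) {X : ℂ → (ℂ × ℂ) × ℂ} {F : ℂ × ℂ × ℂ}
    (hX : HasDerivAt X (unrotate ν (cosSin ν κ z)
      (F.1, F.2.1 - (X z).2 * (oscillatorState ν R (cosSin ν κ z) (X z)).1), F.2.2) z) :
    HasDerivAt (fun z => oscillatorState ν R (cosSin ν κ z) (X z))
      (oscillatorField (oscillatorState ν R (cosSin ν κ z) (X z)) + F) z := by
  have hτ : HasDerivAt (fun z => ν * z + κ) ν z := by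
    simpa using ((hasDerivAt_id z).const_mul ν).add_const κ
  have hc : HasDerivAt (fun z => cos (ν * z + κ)) (-sin (ν * z + κ) * ν) z := hτ.ccos
  have hs : HasDerivAt (fun z => sin (ν * z + κ)) (cos (ν * z + κ) * ν) z := hτ.csin
  have ha : HasDerivAt (fun z => (X z).1.1) _ z := hX.fst.fst
  have hb : HasDerivAt (fun z => R + (X z).1.2) _ z := hX.fst.snd.const_add R
  have hcs : sin (ν * z + κ) ^ 2 + cos (ν * z + κ) ^ 2 = 1 := Complex.sin_sq_add_cos_sq _
  refine HasDerivAt.congr_deriv (((hb.mul hs).add (ha.mul hc)).prodMk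
    ((((hb.mul hc).sub (ha.mul hs)).const_mul ν).prodMk (hX.snd.const_add (ν ^ 2)))) ?_
  refine Prod.ext ?_ (Prod.ext ?_ ?_)
  · simp only [unrotate, oscillatorState, oscillatorField, cosSin, Prod.fst_add]
    linear_combination F.1 * hcs
  · simp only [unrotate, oscillatorState, oscillatorField, cosSin, Prod.fst_add, Prod.snd_add]
    field_simp
    linear_combination (F.2.1 - (X z).2 * ((R + (X z).1.2) * sin (ν * z + κ)
      + (X z).1.1 * cos (ν * z + κ))) * hcs
  · simp [oscillatorField]

theorem norm_oscillatorState_sub_le {M : ℝ} (hM : 1 ≤ M) (hl : ‖l‖ ≤ M) (X : (ℂ × ℂ) × ℂ) :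
    ‖oscillatorState ν R l X - oscillatorState ν R l 0‖ ≤ 2 * (1 + ‖ν‖) * M * ‖X‖ := by
  have hc : ‖l.1‖ ≤ M := (norm_fst_le l).trans hl
  have hs : ‖l.2‖ ≤ M := (norm_snd_le l).trans hl
  have ha : ‖X.1.1‖ ≤ ‖X‖ := (norm_fst_le X.1).trans (norm_fst_le X)
  have hb : ‖X.1.2‖ ≤ ‖X‖ := (norm_snd_le X.1).trans (norm_fst_le X)
  have hsub : oscillatorState ν R l X - oscillatorState ν R l 0
      = (X.1.2 * l.2 + X.1.1 * l.1, ν * (X.1.2 * l.1 - X.1.1 * l.2), X.2) := by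
    simp only [oscillatorState, Prod.mk_sub_mk, Prod.fst_zero, Prod.snd_zero]
    ring_nf
  have hMX : 0 ≤ M * ‖X‖ := by positivity
  rw [hsub]
  refine norm_prod_le_iff.2 ⟨?_, norm_prod_le_iff.2 ⟨?_, ?_⟩⟩
  · calc ‖X.1.2 * l.2 + X.1.1 * l.1‖ ≤ ‖X‖ * M + ‖X‖ * M :=
          norm_add_le_of_le (norm_mul_le_of_le hb hs) (norm_mul_le_of_le ha hc)
      _ ≤ 2 * (1 + ‖ν‖) * M * ‖X‖ := by nlinarith [norm_nonneg ν]
  · calc ‖ν * (X.1.2 * l.1 - X.1.1 * l.2)‖ ≤ ‖ν‖ * (‖X‖ * M + ‖X‖ * M) :=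
          norm_mul_le_of_le le_rfl
            (norm_sub_le_of_le (norm_mul_le_of_le hb hc) (norm_mul_le_of_le ha hs))
      _ ≤ 2 * (1 + ‖ν‖) * M * ‖X‖ := by nlinarith [norm_nonneg ν]
  · calc ‖X.2‖ ≤ 1 * ‖X‖ := by simpa using norm_snd_le X
      _ ≤ 2 * (1 + ‖ν‖) * M * ‖X‖ := by gcongr; nlinarith [norm_nonneg ν]

theorem contDiff_oscillatorState :
    ContDiff ℂ 1 fun p : (ℂ × ℂ) × ((ℂ × ℂ) × ℂ) => oscillatorState ν R p.1 p.2 := by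
  unfold oscillatorState
  fun_prop

theorem contDiff_unrotate :
    ContDiff ℂ 1 fun p : (ℂ × ℂ) × (ℂ × ℂ) => unrotate ν p.1 p.2 := by
  unfold unrotate
  fun_prop

theorem contDiff_oscillatorState_comp : ContDiff ℂ 1
    fun p : ℂ × (ℂ × ℂ) × ((ℂ × ℂ) × ℂ) => (p.1, oscillatorState ν R p.2.1 p.2.2) :=
  contDiff_fst.prodMk (contDiff_oscillatorState.comp contDiff_snd)

theorem exists_hasDerivAt_perturbed_oscillator {ν : ℝ} (hν : ν ≠ 0) (R κ : ℂ) (d : ℝ)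
    {Ω : Set (ℂ × ℂ × ℂ × ℂ)} {G : ℂ × ℂ × ℂ × ℂ → ℂ × ℂ × ℂ} (hΩ : IsOpen Ω)
    (hΩ₀ : ∀ Y, (0, Y) ∈ Ω) (hG : ContDiffOn ℂ 1 G Ω) :
    ∃ ρ < 0, ∃ C > 0, ∃ Y : ℂ → ℂ × ℂ × ℂ, ∀ z ∈ halfStrip ρ d,
      ‖Y z - oscillatorState ν R (cosSin ν κ z) 0‖ ≤ C * ‖exp z‖ ∧ (exp z, Y z) ∈ Ω ∧
        HasDerivAt Y (oscillatorField (Y z) + exp z • G (exp z, Y z)) z := by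
  let S : ℂ × (ℂ × ℂ) × ((ℂ × ℂ) × ℂ) → ℂ × ℂ × ℂ × ℂ :=
    fun p => (p.1, oscillatorState ν R p.2.1 p.2.2)
  let J : ℂ × (ℂ × ℂ) × ((ℂ × ℂ) × ℂ) → ℂ →L[ℂ] ℂ × ℂ := fun p =>
    ContinuousLinearMap.toSpanSingleton ℂ (unrotate ν p.2.1 (0, -(S p).2.1))
  let Γ : ℂ × (ℂ × ℂ) × ((ℂ × ℂ) × ℂ) → (ℂ × ℂ) × ℂ := fun p =>
    (unrotate ν p.2.1 ((G (S p)).1, (G (S p)).2.1), (G (S p)).2.2)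
  have hS : ContDiff ℂ 1 S := contDiff_oscillatorState_comp
  have hGS : ContDiffOn ℂ 1 (G ∘ S) (S ⁻¹' Ω) := hG.comp hS.contDiffOn fun _ h => h
  have hJ : ContDiffOn ℂ 1 J (S ⁻¹' Ω) :=
    ((ContinuousLinearMap.toSpanSingletonCLE (𝕜 := ℂ) (E := ℂ × ℂ)).contDiff.comp
      (contDiff_unrotate.comp (contDiff_snd.fst.prodMk
        (contDiff_const.prodMk hS.snd.fst.neg)))).contDiffOn
  have hΓ : ContDiffOn ℂ 1 Γ (S ⁻¹' Ω) :=
    (contDiff_unrotate.comp_contDiffOn (contDiff_snd.fst.contDiffOn.prodMk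
      (hGS.fst.prodMk hGS.snd.fst))).prodMk hGS.snd.snd
  set M := Real.exp (|ν| * |d| + |κ.im|)
  obtain ⟨ρ, hρ, C, hC, X, hX⟩ := exists_hasDerivAt_triangularField (d := d)
    (differentiable_cosSin ν κ) (K := closedBall 0 M)
    (fun z hz => mem_closedBall_zero_iff.2 (norm_cosSin_le ν κ (hz.2.le.trans (le_abs_self d))))
    (isCompact_closedBall 0 M) (convex_closedBall 0 M) (hΩ.preimage hS.continuous)
    (fun l _ => hΩ₀ _) hJ hΓ
  refine ⟨ρ, hρ, 2 * (1 + ‖(ν : ℂ)‖) * M * C, by positivity,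
    fun z => oscillatorState ν R (cosSin ν κ z) (X z), fun z hz => ?_⟩
  obtain ⟨hXz, hmem, hderiv⟩ := hX z hz
  refine ⟨?_, hmem, hasDerivAt_oscillatorState (ofReal_ne_zero.2 hν) ?_⟩
  · rw [mul_assoc _ C]
    refine (norm_oscillatorState_sub_le (Real.one_le_exp (by positivity))
      (norm_cosSin_le ν κ (hz.2.le.trans (le_abs_self d))) _).trans ?_
    gcongr
  · refine hderiv.congr_deriv ?_
    simp only [triangularField, J, Γ, S, unrotate, ContinuousLinearMap.toSpanSingleton_apply,
      Prod.smul_mk, Prod.mk_add_mk, Prod.smul_fst, Prod.smul_snd, smul_eq_mul]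
    ring_nf

end Oscillator

section PainleveSystem

open Set Metric

/-- The reciprocal `u = 1 - w ^ 2` of the transcendent, at the state `Y = (w, P, E)`. -/
def recip (Y : ℂ × ℂ × ℂ) : ℂ := 1 - Y.1 ^ 2

/-- The factor `q = 1 - x u` of `y - x = q / u`, at the point `(x, Y)`. -/
def gap (p : ℂ × ℂ × ℂ × ℂ) : ℂ := 1 - p.1 * recip p.2

/-- The points `(x, Y)` at which the system for `Y` is regular. -/
def regularDomain : Set (ℂ × ℂ × ℂ × ℂ) := {p | 1 - p.1 ≠ 0 ∧ gap p ≠ 0}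

/-- The field `G` for which the system `x dY/dx = oscillatorField Y + x G` is equivalent to the
Painlevé VI equation with parameter `θ = 2 μ - 1` for `1 / u`, as long as `painleveIntegral`
vanishes. -/
noncomputable def painlevePerturbation (θ : ℂ) (p : ℂ × ℂ × ℂ × ℂ) : ℂ × ℂ × ℂ :=
  let (x, w, P, E) := p
  let u := recip p.2
  (P / (1 - x), w * ((2 * u - 1) * E + θ ^ 2 / 4) / (1 - x) - u * (P + w / 4) / gap p,
    (θ ^ 2 / 4 + u * E) / gap p - (2 * P ^ 2 + P * w / 2) / gap p ^ 2)

/-- The polynomial `P ^ 2 - q (θ ^ 2 / 4 + u E)`, a first integral of the system. Its vanishing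
defines `E` in terms of `w` and `P`. -/
noncomputable def painleveIntegral (θ : ℂ) (p : ℂ × ℂ × ℂ × ℂ) : ℂ :=
  p.2.2.1 ^ 2 - gap p * (θ ^ 2 / 4 + recip p.2 * p.2.2.2)

theorem contDiff_recip : ContDiff ℂ 1 recip := by
  unfold recip
  fun_prop

theorem contDiff_gap : ContDiff ℂ 1 gap :=
  contDiff_const.sub (contDiff_fst.mul (contDiff_recip.comp contDiff_snd))

theorem contDiff_painleveIntegral (θ : ℂ) : ContDiff ℂ 1 (painleveIntegral θ) :=
  (contDiff_snd.snd.fst.pow 2).sub (contDiff_gap.mul (contDiff_const.add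
    ((contDiff_recip.comp contDiff_snd).mul contDiff_snd.snd.snd)))

theorem isOpen_regularDomain : IsOpen regularDomain :=
  (isOpen_ne_fun (by fun_prop) continuous_const).inter
    (isOpen_ne_fun contDiff_gap.continuous continuous_const)

theorem zero_mem_regularDomain (Y : ℂ × ℂ × ℂ) : (0, Y) ∈ regularDomain := by
  simp [regularDomain, gap]

theorem contDiffOn_painlevePerturbation (θ : ℂ) :
    ContDiffOn ℂ 1 (painlevePerturbation θ) regularDomain := by
  have hgap : ContDiffOn ℂ 1 gap regularDomain := contDiff_gap.contDiffOn
  have hx (f) (hf : ContDiff ℂ 1 f) : ContDiffOn ℂ 1 (fun p => f p / (1 - p.1)) regularDomain :=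
    hf.contDiffOn.div (by fun_prop) fun _ hp => hp.1
  have hq (f) (hf : ContDiff ℂ 1 f) : ContDiffOn ℂ 1 (fun p => f p / gap p) regularDomain :=
    hf.contDiffOn.div hgap fun _ hp => hp.2
  have hq₂ (f) (hf : ContDiff ℂ 1 f) : ContDiffOn ℂ 1 (fun p => f p / gap p ^ 2) regularDomain :=
    hf.contDiffOn.div (hgap.pow 2) fun _ hp => pow_ne_zero 2 hp.2
  have hu : ContDiff ℂ 1 fun p : ℂ × ℂ × ℂ × ℂ => recip p.2 := contDiff_recip.comp contDiff_snd
  exact (hx _ (by fun_prop)).prodMk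
    (((hx _ (by fun_prop)).sub (hq _ (by fun_prop))).prodMk
      ((hq _ (by fun_prop)).sub (hq₂ _ (by fun_prop))))

variable {θ R κ z : ℂ} {ν : ℝ} {Y : ℂ → ℂ × ℂ × ℂ}

theorem hasDerivAt_painleveIntegral (hz : (exp z, Y z) ∈ regularDomain)
    (hY : HasDerivAt Y
      (oscillatorField (Y z) + exp z • painlevePerturbation θ (exp z, Y z)) z) :
    HasDerivAt (fun z => painleveIntegral θ (exp z, Y z)) 0 z := by
  have hw : HasDerivAt (fun z => (Y z).1) _ z := hY.fst
  have hP : HasDerivAt (fun z => (Y z).2.1) _ z := hY.snd.fst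
  have hE : HasDerivAt (fun z => (Y z).2.2) _ z := hY.snd.snd
  have hu : HasDerivAt (fun z => recip (Y z)) _ z := (hw.pow 2).const_sub 1
  have hq : HasDerivAt (fun z => gap (exp z, Y z)) _ z :=
    ((Complex.hasDerivAt_exp z).mul hu).const_sub 1
  refine HasDerivAt.congr_deriv ((hP.pow 2).sub
    (hq.mul ((hu.mul hE).const_add (θ ^ 2 / 4)))) ?_
  obtain ⟨hx0, hq0⟩ := hz
  generalize Y z = Y₀ at hq0 ⊢
  obtain ⟨w, P, E⟩ := Y₀
  simp only [gap, recip] at hx0 hq0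
  simp only [oscillatorField, painlevePerturbation, gap, recip, Prod.smul_mk, Prod.mk_add_mk,
    smul_eq_mul, Nat.cast_ofNat, Nat.add_one_sub_one, pow_one]
  field_simp
  ring

theorem painleveIntegral_oscillatorState (hR : 4 * ν ^ 2 * R ^ 2 = 4 * ν ^ 2 + θ ^ 2) :
    painleveIntegral θ (0, oscillatorState ν R (cosSin ν κ z) 0) = 0 := by
  have hcs : sin (ν * z + κ) ^ 2 + cos (ν * z + κ) ^ 2 = 1 := Complex.sin_sq_add_cos_sq _
  simp only [painleveIntegral, gap, recip, oscillatorState, cosSin, Prod.fst_zero, Prod.snd_zero]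
  linear_combination R ^ 2 * ν ^ 2 * hcs + hR / 4

theorem exists_norm_sub_oscillatorState_le {V : Type*} [NormedAddCommGroup V] [NormedSpace ℂ V]
    {H : ℂ × ℂ × ℂ × ℂ → V} (hH : ContDiff ℂ 1 H) (ν : ℝ) (R κ : ℂ) (d C : ℝ) :
    ∃ C' > 0, ∀ z ∈ halfStrip 0 d, ∀ Y₀,
      ‖Y₀ - oscillatorState ν R (cosSin ν κ z) 0‖ ≤ C * ‖exp z‖ →
        ‖H (exp z, Y₀) - H (0, oscillatorState ν R (cosSin ν κ z) 0)‖ ≤ C' * ‖exp z‖ := by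
  have hcont : Continuous fun l => oscillatorState ν R l 0 :=
    contDiff_oscillatorState.continuous.comp (Continuous.prodMk_left 0)
  obtain ⟨B, hB⟩ := (isCompact_closedBall 0
    (Real.exp (|ν| * d + |κ.im|))).exists_bound_of_continuousOn hcont.continuousOn
  set r := max 1 (|C| + B)
  obtain ⟨L, hL, -, hlip⟩ := exists_norm_le_and_norm_sub_le
    (isCompact_closedBall (0 : ℂ × ℂ × ℂ × ℂ) r) (convex_closedBall _ _) hH.contDiffOn
  refine ⟨L * max 1 |C|, by positivity, fun z hz Y₀ hY₀ => ?_⟩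
  set Y₁ := oscillatorState ν R (cosSin ν κ z) 0
  have hexp : ‖exp z‖ ≤ 1 := by
    rw [Complex.norm_exp, Real.exp_le_one_iff]
    exact hz.1.le
  have hY₁ : ‖Y₁‖ ≤ B := hB _ (mem_closedBall_zero_iff.2 (norm_cosSin_le ν κ hz.2.le))
  have hsub : ‖Y₀ - Y₁‖ ≤ |C| * ‖exp z‖ := hY₀.trans (by gcongr; exact le_abs_self C)
  have hY₀ : ‖Y₀‖ ≤ |C| + B := by
    simpa using norm_add_le_of_le (hsub.trans (mul_le_of_le_one_right (abs_nonneg C) hexp)) hY₁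
  have hp₀ : (exp z, Y₀) ∈ closedBall 0 r :=
    mem_closedBall_zero_iff.2 (max_le_max hexp hY₀)
  have hp₁ : ((0 : ℂ), Y₁) ∈ closedBall 0 r := mem_closedBall_zero_iff.2 (max_le_max (by simp)
    (hY₁.trans (le_add_of_nonneg_left (abs_nonneg C))))
  refine (hlip _ hp₀ _ hp₁).trans ?_
  rw [mul_assoc, max_mul_of_nonneg _ _ (norm_nonneg _), one_mul, Prod.mk_sub_mk, sub_zero]
  gcongr
  exact max_le_max le_rfl hsub

theorem exists_painleve_system (hν : ν ≠ 0) (hR : 4 * ν ^ 2 * R ^ 2 = 4 * ν ^ 2 + θ ^ 2) (κ : ℂ)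
    (d : ℝ) :
    ∃ ρ < 0, ∃ C > 0, ∃ Y : ℂ → ℂ × ℂ × ℂ, ∀ z ∈ halfStrip ρ d,
      ‖recip (Y z) - (1 - R ^ 2 * sin (ν * z + κ) ^ 2)‖ ≤ C * ‖exp z‖ ∧
        (exp z, Y z) ∈ regularDomain ∧ painleveIntegral θ (exp z, Y z) = 0 ∧
          HasDerivAt Y (oscillatorField (Y z) + exp z • painlevePerturbation θ (exp z, Y z)) z := by
  obtain ⟨ρ, hρ, C, -, Y, hY⟩ := exists_hasDerivAt_perturbed_oscillator hν R κ d
    isOpen_regularDomain zero_mem_regularDomain (contDiffOn_painlevePerturbation θ)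
  obtain ⟨Cu, hCu, hu⟩ := exists_norm_sub_oscillatorState_le
    (contDiff_recip.comp contDiff_snd) ν R κ d C
  obtain ⟨CQ, -, hQ⟩ := exists_norm_sub_oscillatorState_le
    (contDiff_painleveIntegral θ) ν R κ d C
  refine ⟨ρ, hρ, Cu, hCu, Y, fun z hz => ⟨?_, (hY z hz).2.1, ?_, (hY z hz).2.2⟩⟩
  · simpa [recip, oscillatorState, cosSin, mul_pow] using
      hu z (halfStrip_mono hρ.le hz) (Y z) (hY z hz).1
  · refine eq_zero_of_hasDerivAt_zero (f := fun z => painleveIntegral θ (exp z, Y z))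
      (B := CQ) isOpen_halfStrip isLeftStable_halfStrip
      (fun z hz => hasDerivAt_painleveIntegral (hY z hz).2.1 (hY z hz).2.2) (fun z hz => ?_) hz
    simpa [painleveIntegral_oscillatorState hR] using
      hQ z (halfStrip_mono hρ.le hz) (Y z) (hY z hz).1

end PainleveSystem

section PainleveSix

open Filter Topology

/-- The value of `y''` prescribed by the Painlevé VI equation with parameters `α = θ ^ 2 / 2`,
`β = γ = 0`, `δ = 1 / 2`, in terms of `y` and `y'`. -/
noncomputable def painleveSixRhs (θ x y y' : ℂ) : ℂ :=
  (1 / 2) * (1 / y + 1 / (y - 1) + 1 / (y - x)) * y' ^ 2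
    - (1 / x + 1 / (x - 1) + 1 / (y - x)) * y'
    + (1 / 2) * (y * (y - 1) * (y - x) / (x ^ 2 * (x - 1) ^ 2)) *
      (θ ^ 2 + x * (x - 1) / (y - x) ^ 2)

/-- The value of `y'` for `y = 1 / u`, at the point `(x, (w, P, E))`. -/
noncomputable def recipSlope (p : ℂ × ℂ × ℂ × ℂ) : ℂ :=
  2 * p.2.1 * p.2.2.1 / (p.1 * (1 - p.1) * recip p.2 ^ 2)

/-- The function `Y = (w, P, E)` of `x` satisfies the Painlevé system at the regular point `x`,
and its first integral vanishes there. -/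
structure IsPainleveState (θ : ℂ) (Y : ℂ → ℂ × ℂ × ℂ) (x : ℂ) : Prop where
  ne_zero : x ≠ 0
  mem_regularDomain : (x, Y x) ∈ regularDomain
  painleveIntegral_eq_zero : painleveIntegral θ (x, Y x) = 0
  hasDerivAt :
    HasDerivAt Y (x⁻¹ • (oscillatorField (Y x) + x • painlevePerturbation θ (x, Y x))) x

namespace IsPainleveState

variable {θ x : ℂ} {Y : ℂ → ℂ × ℂ × ℂ}

theorem comp_log {Z : ℂ → ℂ × ℂ × ℂ} (hx : x ∈ slitPlane)
    (hreg : (exp (log x), Z (log x)) ∈ regularDomain)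
    (hint : painleveIntegral θ (exp (log x), Z (log x)) = 0)
    (hZ : HasDerivAt Z (oscillatorField (Z (log x)) +
      exp (log x) • painlevePerturbation θ (exp (log x), Z (log x))) (log x)) :
    IsPainleveState θ (fun x => Z (log x)) x := by
  have hx0 := slitPlane_ne_zero hx
  rw [Complex.exp_log hx0] at hreg hint hZ
  exact ⟨hx0, hreg, hint, hZ.scomp x (Complex.hasDerivAt_log hx)⟩

theorem hasDerivAt_fst (h : IsPainleveState θ Y x) :
    HasDerivAt (fun x => (Y x).1) ((Y x).2.1 / (x * (1 - x))) x := by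
  refine HasDerivAt.congr_deriv h.hasDerivAt.fst ?_
  have hx := h.ne_zero
  have hx1 := h.mem_regularDomain.1
  simp only [oscillatorField, painlevePerturbation, Prod.fst_add, Prod.smul_fst, smul_eq_mul]
  field_simp
  ring

theorem hasDerivAt_recip (h : IsPainleveState θ Y x) :
    HasDerivAt (fun x => recip (Y x)) (-(2 * (Y x).1 * ((Y x).2.1 / (x * (1 - x))))) x := by
  simpa [recip] using (h.hasDerivAt_fst.pow 2).const_sub 1

theorem hasDerivAt_one_div_recip (h : IsPainleveState θ Y x) (hu : recip (Y x) ≠ 0) :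
    HasDerivAt (fun x => 1 / recip (Y x)) (recipSlope (x, Y x)) x := by
  simp only [one_div]
  refine (h.hasDerivAt_recip.inv hu).congr_deriv ?_
  have hx := h.ne_zero
  have hx1 := h.mem_regularDomain.1
  simp only [recipSlope]
  field_simp

theorem one_div_recip_sub_one (hu : recip (Y x) ≠ 0) :
    1 / recip (Y x) - 1 = (Y x).1 ^ 2 / recip (Y x) := by
  field_simp
  simp [recip]

theorem one_div_recip_sub (hu : recip (Y x) ≠ 0) :
    1 / recip (Y x) - x = gap (x, Y x) / recip (Y x) := by
  field_simp
  simp [gap, mul_comm]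

theorem energy_eq (h : IsPainleveState θ Y x) (hu : recip (Y x) ≠ 0) :
    (Y x).2.2 = ((Y x).2.1 ^ 2 / gap (x, Y x) - θ ^ 2 / 4) / recip (Y x) := by
  have hq : gap (x, Y x) ≠ 0 := h.mem_regularDomain.2
  have hint := h.painleveIntegral_eq_zero
  simp only [painleveIntegral] at hint
  field_simp
  linear_combination -4 * hint

theorem hasDerivAt_recipSlope (h : IsPainleveState θ Y x) (hu : recip (Y x) ≠ 0)
    (hw : (Y x).1 ≠ 0) :
    HasDerivAt (fun x => recipSlope (x, Y x))
      (painleveSixRhs θ x (1 / recip (Y x)) (recipSlope (x, Y x))) x := by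
  have hx := h.ne_zero
  obtain ⟨hx1 : 1 - x ≠ 0, hq : gap (x, Y x) ≠ 0⟩ := h.mem_regularDomain
  have hP : HasDerivAt (fun x => (Y x).2.1) _ x := h.hasDerivAt.snd.fst
  have hden : HasDerivAt (fun z => z * (1 - z) * recip (Y z) ^ 2) _ x :=
    ((hasDerivAt_id x).mul ((hasDerivAt_id x).const_sub 1)).mul (h.hasDerivAt_recip.pow 2)
  refine HasDerivAt.congr_deriv (((h.hasDerivAt_fst.const_mul 2).mul hP).div hden
    (mul_ne_zero (mul_ne_zero hx hx1) (pow_ne_zero 2 hu))) ?_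
  have hx1' : x - 1 = -(1 - x) := by ring
  simp only [painleveSixRhs, one_div_recip_sub_one hu, one_div_recip_sub hu, hx1', recipSlope,
    oscillatorField, painlevePerturbation, h.energy_eq hu, Prod.smul_mk, Prod.mk_add_mk,
    smul_eq_mul, id_eq, Pi.mul_apply]
  set q := gap (x, Y x) with hq_def
  set u := recip (Y x) with hu_def
  set t := 1 - x with ht
  field_simp
  rw [hq_def, gap, hu_def, recip, show x = 1 - t by rw [ht]; ring]
  ring

theorem deriv_deriv_one_div_recip {D : Set ℂ} (hD : IsOpen D)
    (h : ∀ x ∈ D, IsPainleveState θ Y x) (hx : x ∈ D) (hu : recip (Y x) ≠ 0) (hw : (Y x).1 ≠ 0) :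
    (∀ᶠ z in 𝓝 x, DifferentiableAt ℂ (fun s => 1 / recip (Y s)) z ∧
        DifferentiableAt ℂ (deriv fun s => 1 / recip (Y s)) z) ∧
      deriv (deriv fun s => 1 / recip (Y s)) x =
        painleveSixRhs θ x (1 / recip (Y x)) (deriv (fun s => 1 / recip (Y s)) x) := by
  have hderiv : ∀ᶠ z in 𝓝 x,
      HasDerivAt (fun s => 1 / recip (Y s)) (recipSlope (z, Y z)) z := by
    filter_upwards [hD.mem_nhds hx, (h x hx).hasDerivAt_recip.continuousAt.eventually_ne hu]
      with z hz hz0 using (h z hz).hasDerivAt_one_div_recip hz0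
  refine ⟨?_, ?_⟩
  · have han : AnalyticAt ℂ (fun s => 1 / recip (Y s)) x :=
      analyticAt_iff_eventually_differentiableAt.2 (hderiv.mono fun z hz => hz.differentiableAt)
    exact han.eventually_analyticAt.mono fun z hz =>
      ⟨hz.differentiableAt, hz.deriv.differentiableAt⟩
  · have hslope : deriv (fun s => 1 / recip (Y s)) =ᶠ[𝓝 x] fun z => recipSlope (z, Y z) :=
      hderiv.mono fun z hz => hz.deriv
    rw [hslope.deriv_eq, hslope.eq_of_nhds]
    exact ((h x hx).hasDerivAt_recipSlope hu hw).deriv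

end IsPainleveState

end PainleveSix

section SlitDisk

/-- The punctured disk of radius `ε`, slit along the negative real axis. -/
def slitDisk (ε : ℝ) : Set ℂ := {x | 0 < ‖x‖ ∧ ‖x‖ < ε ∧ |arg x| < Real.pi}

variable {ρ ε : ℝ} {x : ℂ}

theorem slitDisk_eq : slitDisk ε = slitPlane ∩ Metric.ball 0 ε := by
  ext x
  have harg : |arg x| < Real.pi ↔ arg x ≠ Real.pi := by
    simp [abs_lt, neg_pi_lt_arg, (arg_le_pi x).lt_iff_ne]
  simp only [slitDisk, Set.mem_ofPred_eq, Set.mem_inter_iff, mem_slitPlane_iff_arg, harg,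
    mem_ball_zero_iff, norm_pos_iff]
  tauto

theorem isOpen_slitDisk : IsOpen (slitDisk ε) :=
  slitDisk_eq ▸ isOpen_slitPlane.inter Metric.isOpen_ball

theorem log_mem_halfStrip (hx : x ∈ slitDisk (Real.exp ρ)) : log x ∈ halfStrip ρ Real.pi :=
  ⟨log_re x ▸ (Real.log_lt_iff_lt_exp hx.1).2 hx.2.1, log_im x ▸ hx.2.2⟩

end SlitDisk

theorem exists_isPainleveState {θ R : ℂ} {ν : ℝ} (hν : ν ≠ 0)
    (hR : 4 * ν ^ 2 * R ^ 2 = 4 * ν ^ 2 + θ ^ 2) (κ : ℂ) :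
    ∃ ε > 0, ε < 1 ∧ ∃ C > 0, ∃ Y : ℂ → ℂ × ℂ × ℂ, ∀ x ∈ slitDisk ε,
      ‖recip (Y x) - (1 - R ^ 2 * sin (ν * log x + κ) ^ 2)‖ ≤ C * ‖x‖ ∧
        IsPainleveState θ Y x := by
  obtain ⟨ρ, hρ, C, hC, Z, hZ⟩ := exists_painleve_system hν hR κ Real.pi
  refine ⟨Real.exp ρ, Real.exp_pos ρ, Real.exp_lt_one_iff.2 hρ, C, hC, fun x => Z (log x),
    fun x hx => ?_⟩
  obtain ⟨hu, hreg, hint, hderiv⟩ := hZ (log x) (log_mem_halfStrip hx)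
  refine ⟨?_, .comp_log (slitDisk_eq ▸ hx).1 hreg hint hderiv⟩
  rwa [Complex.exp_log (norm_pos_iff.1 hx.1)] at hu

/-- existence of a branch of a `PVI_μ` transcendent with the oscillatory
critical behaviour `1/y(x) = 1 − ((4ν²+(2μ−1)²)/(4ν²))·sin²(ν·Log x + φ/2 − π/4) + O(x)`
on a slit punctured disk `D = {0 < |x| < ε, |arg x| < π}`: there are `ε ∈ (0,1)`, `C > 0`
and `u` holomorphic on `D` with the stated bound, such that wherever `u(x) ∉ {0, 1, 1/x}`
the function `y = 1/u` is twice complex-differentiable near `x` and satisfies `PVI_μ`. -/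
theorem stmt_19 (μ : ℂ) (ν : ℝ) (hν : ν ≠ 0) (φ : ℂ)
    (h1 : 2*μ - 1 ≠ 2*I*(ν:ℂ)) (h2 : 2*μ - 1 ≠ -(2*I*(ν:ℂ))) :
    ∃ ε : ℝ, 0 < ε ∧ ε < 1 ∧ ∃ C : ℝ, 0 < C ∧ ∃ u : ℂ → ℂ,
      DifferentiableOn ℂ u {x : ℂ | 0 < ‖x‖ ∧ ‖x‖ < ε ∧ |Complex.arg x| < Real.pi} ∧
      (∀ x ∈ {x : ℂ | 0 < ‖x‖ ∧ ‖x‖ < ε ∧ |Complex.arg x| < Real.pi},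
        ‖u x - (1 - (4*(ν:ℂ)^2 + (2*μ - 1)^2) / (4*(ν:ℂ)^2) *
          (Complex.sin ((ν:ℂ) * Complex.log x + φ/2 - (Real.pi:ℂ)/4))^2)‖ ≤ C * ‖x‖) ∧
      (∀ x ∈ {x : ℂ | 0 < ‖x‖ ∧ ‖x‖ < ε ∧ |Complex.arg x| < Real.pi},
        u x ≠ 0 → u x ≠ 1 → u x ≠ 1/x →
        (∀ᶠ z in nhds x, DifferentiableAt ℂ (fun s => 1 / u s) z ∧
          DifferentiableAt ℂ (deriv (fun s => 1 / u s)) z) ∧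
        deriv (deriv (fun s => 1 / u s)) x =
          (1/2) * (1/(1/u x) + 1/(1/u x - 1) + 1/(1/u x - x)) *
              (deriv (fun s => 1 / u s) x)^2
            - (1/x + 1/(x - 1) + 1/(1/u x - x)) * deriv (fun s => 1 / u s) x
            + (1/2) * ((1/u x) * (1/u x - 1) * (1/u x - x) / (x^2 * (x - 1)^2)) *
                ((2*μ - 1)^2 + x*(x - 1)/(1/u x - x)^2)) := by
  have hν₀ : (ν : ℂ) ≠ 0 := ofReal_ne_zero.2 hν
  obtain ⟨R, hR⟩ := IsAlgClosed.exists_pow_nat_eq ((4 * (ν : ℂ) ^ 2 + (2 * μ - 1) ^ 2) /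
    (4 * (ν : ℂ) ^ 2)) two_pos
  obtain ⟨ε, hε, hε1, C, hC, Y, hY⟩ := exists_isPainleveState hν
    (by rw [hR]; field_simp : 4 * (ν : ℂ) ^ 2 * R ^ 2 = 4 * (ν : ℂ) ^ 2 + (2 * μ - 1) ^ 2)
    (φ / 2 - Real.pi / 4)
  refine ⟨ε, hε, hε1, C, hC, fun x => recip (Y x), fun x hx =>
    (hY x hx).2.hasDerivAt_recip.differentiableAt.differentiableWithinAt, fun x hx => ?_,
    fun x hx hu0 hu1 _ => ?_⟩
  · simpa only [hR, ← add_sub_assoc] using (hY x hx).1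
  · have hw : (Y x).1 ≠ 0 := fun hw => hu1 (by simp [recip, hw])
    exact IsPainleveState.deriv_deriv_one_div_recip isOpen_slitDisk (fun x hx => (hY x hx).2)
      hx hu0 hw
end
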